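/- Let (A, {Δ(λ)}) be a split quasi-hereditary algebra over a commutative Noetherian ring R with characteristic tilting module T, and set B = End_A(T)^op. Then the functor Hom_A(T, −) restricts to an exact equivalence between F(∇̃) over A and F(Δ̃_B) over B, where Δ_B(λ) := Hom_A(T, ∇(λ)); moreover (B, {Δ_B(λ)}_{λ∈Λ^op}) is a split quasi-hereditary R-algebra, where Λ^op carries the opposite partial order. -/

import Mathlib

open scoped TensorProduct
open CategoryTheory

noncomputable section

section Core

variable (R : Type) [CommRing R] (A : Type) [Ring A] [Algebra R A]

/-- The action of `a : A` on an `A`-module as an `R`-linear endomorphism. -/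
def actL (M : Type) [AddCommGroup M] [Module R M] [Module A M] [IsScalarTower R A M]
    (a : A) : M →ₗ[R] M where
  toFun m := a • m
  map_add' := smul_add a
  map_smul' r m := (smul_comm r a m).symm

/-- The right `A`-module (i.e. `Aᵐᵒᵖ`-module) structure on the `R`-linear dual of a left
`A`-module `M`, given by `(aᵒᵖ • f) m = f (a • m)`. -/
instance dualModule (M : Type) [AddCommGroup M] [Module R M] [Module A M]
    [IsScalarTower R A M] : Module Aᵐᵒᵖ (M →ₗ[R] R) where
  smul a f := f.comp (actL R A M a.unop)
  one_smul f := by ext m; show f ((1 : Aᵐᵒᵖ).unop • m) = f m; simp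
  mul_smul a b f := by
    ext m
    show f ((a * b).unop • m) = f (b.unop • a.unop • m)
    simp [mul_smul]
  smul_zero a := rfl
  smul_add a f g := rfl
  add_smul a b f := by
    ext m
    show f ((a + b).unop • m) = f (a.unop • m) + f (b.unop • m)
    simp [add_smul]
  zero_smul f := by ext m; show f ((0 : Aᵐᵒᵖ).unop • m) = 0; simp

@[simp] lemma dualModule_smul_apply (M : Type) [AddCommGroup M] [Module R M] [Module A M]
    [IsScalarTower R A M] (a : Aᵐᵒᵖ) (f : M →ₗ[R] R) (m : M) :
    (a • f) m = f (a.unop • m) := rfl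

instance dualTower (M : Type) [AddCommGroup M] [Module R M] [Module A M]
    [IsScalarTower R A M] : IsScalarTower R Aᵐᵒᵖ (M →ₗ[R] R) := by
  constructor
  intro r a f
  ext m
  show f ((r • a).unop • m) = r • f (a.unop • m)
  rw [MulOpposite.unop_smul, smul_assoc, map_smul]

/-- The left `A`-module structure on the `R`-linear dual of a right `A`-module
(i.e. an `Aᵐᵒᵖ`-module) `M`, given by `(a • f) m = f (aᵒᵖ • m)`. -/
instance dualModule' (M : Type) [AddCommGroup M] [Module R M] [Module Aᵐᵒᵖ M]
    [IsScalarTower R Aᵐᵒᵖ M] : Module A (M →ₗ[R] R) where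
  smul a f := f.comp (actL R Aᵐᵒᵖ M (MulOpposite.op a))
  one_smul f := by ext m; show f (MulOpposite.op (1 : A) • m) = f m; simp
  mul_smul a b f := by
    ext m
    show f (MulOpposite.op (a * b) • m) = f (MulOpposite.op b • MulOpposite.op a • m)
    rw [MulOpposite.op_mul, mul_smul]
  smul_zero a := rfl
  smul_add a f g := rfl
  add_smul a b f := by
    ext m
    show f (MulOpposite.op (a + b) • m) = f (MulOpposite.op a • m) + f (MulOpposite.op b • m)
    rw [MulOpposite.op_add, add_smul, map_add]
  zero_smul f := by ext m; show f (MulOpposite.op (0 : A) • m) = 0; simp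

@[simp] lemma dualModule'_smul_apply (M : Type) [AddCommGroup M] [Module R M] [Module Aᵐᵒᵖ M]
    [IsScalarTower R Aᵐᵒᵖ M] (a : A) (f : M →ₗ[R] R) (m : M) :
    (a • f) m = f (MulOpposite.op a • m) := rfl

instance dualTower' (M : Type) [AddCommGroup M] [Module R M] [Module Aᵐᵒᵖ M]
    [IsScalarTower R Aᵐᵒᵖ M] : IsScalarTower R A (M →ₗ[R] R) := by
  constructor
  intro r a f
  ext m
  show f (MulOpposite.op (r • a) • m) = r • f (MulOpposite.op a • m)
  rw [MulOpposite.op_smul, smul_assoc, map_smul]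

variable (Λ : Type) [Fintype Λ] [PartialOrder Λ]

/-- Data witnessing that `X` is isomorphic to `Δ(λ) ⊗_R U` for some `λ ∈ S` and some finitely
generated projective `R`-module `U`. -/
structure TensorFactor (Δ : Λ → Type) [∀ l, AddCommGroup (Δ l)] [∀ l, Module R (Δ l)]
    [∀ l, Module A (Δ l)] [∀ l, IsScalarTower R A (Δ l)]
    (S : Set Λ) (X : Type) [AddCommGroup X] [Module A X] : Type 1 where
  lam : Λ
  mem : lam ∈ S
  U : ModuleCat.{0} R
  fin : Module.Finite R U
  proj : Module.Projective R U
  iso : X ≃ₗ[A] (TensorProduct R (Δ lam) U)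

/-- `M` belongs to `F(Δ̃_S)`: it is a finitely generated `A`-module with a finite filtration
whose factors are of the form `Δ(λ) ⊗_R U`, `λ ∈ S`, `U` a finitely generated projective
`R`-module. -/
def InFilt (Δ : Λ → Type) [∀ l, AddCommGroup (Δ l)] [∀ l, Module R (Δ l)]
    [∀ l, Module A (Δ l)] [∀ l, IsScalarTower R A (Δ l)]
    (S : Set Λ) (M : Type) [AddCommGroup M] [Module A M] : Prop :=
  Module.Finite A M ∧
  ∃ (n : ℕ) (c : Fin (n + 1) → Submodule A M), c 0 = ⊥ ∧ c (Fin.last n) = ⊤ ∧ Monotone c ∧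
    ∀ i : Fin n, Nonempty (TensorFactor R A Λ Δ S
      (↥(c i.succ) ⧸ (Submodule.comap (c i.succ).subtype (c i.castSucc))))

/-- Data witnessing that `X` is isomorphic to `F(λ)` for some `λ ∈ S`. -/
structure PlainFactor (F : Λ → Type) [∀ l, AddCommGroup (F l)] [∀ l, Module A (F l)]
    (S : Set Λ) (X : Type) [AddCommGroup X] [Module A X] : Type 1 where
  lam : Λ
  mem : lam ∈ S
  iso : X ≃ₗ[A] F lam

/-- `M` has a finite filtration with factors among the modules `F(λ)`, `λ ∈ S`. -/
def InFiltPlain (F : Λ → Type) [∀ l, AddCommGroup (F l)] [∀ l, Module A (F l)]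
    (S : Set Λ) (M : Type) [AddCommGroup M] [Module A M] : Prop :=
  Module.Finite A M ∧
  ∃ (n : ℕ) (c : Fin (n + 1) → Submodule A M), c 0 = ⊥ ∧ c (Fin.last n) = ⊤ ∧ Monotone c ∧
    ∀ i : Fin n, Nonempty (PlainFactor A Λ F S
      (↥(c i.succ) ⧸ (Submodule.comap (c i.succ).subtype (c i.castSucc))))

/-- `X` is a direct summand of `Y` (as `A`-modules). -/
def IsDirectSummand (X Y : Type) [AddCommGroup X] [Module A X] [AddCommGroup Y]
    [Module A Y] : Prop :=
  ∃ (i : X →ₗ[A] Y) (p : Y →ₗ[A] X), p.comp i = LinearMap.id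

/-- `X` belongs to the additive closure `add T`. -/
def InAdd (T : Type) [AddCommGroup T] [Module A T] (X : Type) [AddCommGroup X]
    [Module A X] : Prop :=
  ∃ n : ℕ, IsDirectSummand A X (Fin n → T)

/-- A split quasi-hereditary structure on the `R`-algebra `A` with standard modules
`Δ(λ)`, `λ ∈ Λ` (following Rouquier's module-theoretic definition). -/
structure SplitQH (Δ : Λ → Type) [∀ l, AddCommGroup (Δ l)] [∀ l, Module R (Δ l)]
    [∀ l, Module A (Δ l)] [∀ l, IsScalarTower R A (Δ l)] : Type 1 where
  algFin : Module.Finite R A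
  algProj : Module.Projective R A
  deltaFinA : ∀ l, Module.Finite A (Δ l)
  deltaFinR : ∀ l, Module.Finite R (Δ l)
  deltaProjR : ∀ l, Module.Projective R (Δ l)
  hom_le : ∀ l m : Λ, (∃ f : Δ l →ₗ[A] Δ m, f ≠ 0) → l ≤ m
  endIso : ∀ l, Nonempty ((Module.End A (Δ l)) ≃ₐ[R] R)
  P : Λ → ModuleCat.{0} A
  P_proj : ∀ l, Module.Projective A (P l)
  P_fin : ∀ l, Module.Finite A (P l)
  epi : ∀ l, (P l : Type) →ₗ[A] Δ l
  epi_surj : ∀ l, Function.Surjective (epi l)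
  ker_filt : ∀ l, InFilt R A Λ Δ {m | l < m} ↥(LinearMap.ker (epi l))
  add_gen : ∀ (Q : ModuleCat.{0} A), Module.Finite A Q → Module.Projective A Q →
    InAdd A (∀ l, (P l : Type)) Q

/-- Vanishing of `Ext^i_A(M, N)` (computed in the abelian category of `A`-modules). -/
def extVanish (M : Type) [AddCommGroup M] [Module A M] (N : Type) [AddCommGroup N]
    [Module A N] (i : ℕ) : Prop :=
  Subsingleton (((Ext ℤ (ModuleCat.{0} A) i).obj
    (Opposite.op (ModuleCat.of A M))).obj (ModuleCat.of A N))

/-- `∇` is a family of costandard modules for the split quasi-hereditary algebra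
`(A, {Δ(λ)})`: the `R`-linear duals `D∇(λ)` make `A^op` split quasi-hereditary (with the same
poset), and the `Ext`-orthogonality relations with the standard modules hold. -/
def IsCostandard (Δ : Λ → Type) [∀ l, AddCommGroup (Δ l)] [∀ l, Module R (Δ l)]
    [∀ l, Module A (Δ l)] [∀ l, IsScalarTower R A (Δ l)]
    (N : Λ → Type) [∀ l, AddCommGroup (N l)] [∀ l, Module R (N l)]
    [∀ l, Module A (N l)] [∀ l, IsScalarTower R A (N l)] : Prop :=
  Nonempty (SplitQH R Aᵐᵒᵖ Λ (fun l => (N l →ₗ[R] R))) ∧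
  (∀ l, Nonempty ((Δ l →ₗ[A] N l) ≃ₗ[R] R)) ∧
  (∀ l m, l ≠ m → ∀ f : Δ l →ₗ[A] N m, f = 0) ∧
  (∀ l m : Λ, ∀ i : ℕ, 0 < i → extVanish A (Δ l) (N m) i)

/-- A bundled family of costandard modules. -/
structure CostandardFamily (Δ : Λ → Type) [∀ l, AddCommGroup (Δ l)] [∀ l, Module R (Δ l)]
    [∀ l, Module A (Δ l)] [∀ l, IsScalarTower R A (Δ l)] : Type 1 where
  Nab : Λ → Type
  [acg : ∀ l, AddCommGroup (Nab l)]
  [modR : ∀ l, Module R (Nab l)]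
  [modA : ∀ l, Module A (Nab l)]
  [tower : ∀ l, IsScalarTower R A (Nab l)]
  cost : IsCostandard R A Λ Δ Nab

attribute [instance] CostandardFamily.acg CostandardFamily.modR CostandardFamily.modA
  CostandardFamily.tower

/-- `T` is a family of (partial) tilting modules forming a characteristic tilting module
`⊕ T(λ)`: each `T(λ)` admits an exact sequence `0 → Δ(λ) → T(λ) → X(λ) → 0` with
`X(λ) ∈ F(Δ̃_{μ<λ})` and an exact sequence `0 → Y(λ) → T(λ) → ∇(λ) → 0` with
`Y(λ) ∈ F(∇̃_{μ<λ})`. -/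
def IsCharTilting (Δ : Λ → Type) [∀ l, AddCommGroup (Δ l)] [∀ l, Module R (Δ l)]
    [∀ l, Module A (Δ l)] [∀ l, IsScalarTower R A (Δ l)]
    (N : Λ → Type) [∀ l, AddCommGroup (N l)] [∀ l, Module R (N l)]
    [∀ l, Module A (N l)] [∀ l, IsScalarTower R A (N l)]
    (T : Λ → Type) [∀ l, AddCommGroup (T l)] [∀ l, Module A (T l)] : Prop :=
  ∀ l : Λ,
    (∃ f : Δ l →ₗ[A] T l, Function.Injective f ∧
      InFilt R A Λ Δ {m | m < l} ((T l) ⧸ LinearMap.range f)) ∧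
    (∃ g : T l →ₗ[A] N l, Function.Surjective g ∧
      InFilt R A Λ N {m | m < l} ↥(LinearMap.ker g))

end Core

end

noncomputable section

section RingelDual

variable (R : Type) [CommRing R] (A : Type) [Ring A] [Algebra R A]
variable (T : Type) [AddCommGroup T] [Module A T]

/-- The left module structure on `Hom_A(T, X)` over `B = End_A(T)^op`, by precomposition. -/
instance endOpModule (X : Type) [AddCommGroup X] [Module A X] :
    Module (Module.End A T)ᵐᵒᵖ (T →ₗ[A] X) where
  smul φ g := g.comp φ.unop
  one_smul g := by ext t; rfl
  mul_smul φ ψ g := by ext t; rfl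
  smul_zero φ := rfl
  smul_add φ g g' := rfl
  add_smul φ ψ g := by
    ext t
    show g ((φ + ψ).unop t) = g (φ.unop t) + g (ψ.unop t)
    rw [MulOpposite.unop_add, LinearMap.add_apply, map_add]
  zero_smul g := by
    ext t
    show g ((0 : (Module.End A T)ᵐᵒᵖ).unop t) = 0
    rw [MulOpposite.unop_zero, LinearMap.zero_apply, map_zero]

@[simp] lemma endOpModule_smul_apply (X : Type) [AddCommGroup X] [Module A X]
    (φ : (Module.End A T)ᵐᵒᵖ) (g : T →ₗ[A] X) (t : T) :
    (φ • g) t = g (φ.unop t) := rfl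

instance endOpTower (X : Type) [AddCommGroup X] [Module R X] [Module A X]
    [IsScalarTower R A X] [Module R T] [IsScalarTower R A T] :
    IsScalarTower R (Module.End A T)ᵐᵒᵖ (T →ₗ[A] X) := by
  constructor
  intro r φ g
  ext t
  show g (((r • φ).unop) t) = r • g (φ.unop t)
  rw [MulOpposite.unop_smul, LinearMap.smul_apply, LinearMap.map_smul_of_tower]

/-- The `B`-linear map `Hom_A(T, X) → Hom_A(T, Y)` induced by postcomposition with an
`A`-linear map `f : X → Y`. -/
def Gmap {X Y : Type} [AddCommGroup X] [Module A X] [AddCommGroup Y] [Module A Y]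
    (f : X →ₗ[A] Y) : (T →ₗ[A] X) →ₗ[(Module.End A T)ᵐᵒᵖ] (T →ₗ[A] Y) where
  toFun g := f.comp g
  map_add' g g' := by ext t; simp
  map_smul' φ g := rfl

end RingelDual

section Lifting

variable (A : Type) [Ring A]

/-- Every map from `M` lifts along every surjection with kernel `N`;
equivalently, `Ext¹_A(M, N) = 0`. -/
def LiftsAlong (M N : Type) [AddCommGroup M] [Module A M] [AddCommGroup N] [Module A N] : Prop :=
  ∀ (Y Z : Type) [AddCommGroup Y] [Module A Y] [AddCommGroup Z] [Module A Z]
    (i : N →ₗ[A] Y) (p : Y →ₗ[A] Z), Function.Injective i → Function.Surjective p →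
    Function.Exact i p → ∀ f : M →ₗ[A] Z, ∃ g : M →ₗ[A] Y, p ∘ₗ g = f

/-- Every map to `N` extends along every injection with cokernel `M`;
equivalently, `Ext¹_A(M, N) = 0`. -/
def ExtendsAlong (M N : Type) [AddCommGroup M] [Module A M] [AddCommGroup N] [Module A N] : Prop :=
  ∀ (K P : Type) [AddCommGroup K] [Module A K] [AddCommGroup P] [Module A P]
    (i : K →ₗ[A] P) (p : P →ₗ[A] M), Function.Injective i → Function.Surjective p →
    Function.Exact i p → ∀ f : K →ₗ[A] N, ∃ g : P →ₗ[A] N, g ∘ₗ i = f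

variable {A}
variable {M N M' N' M'' N'' : Type} [AddCommGroup M] [Module A M] [AddCommGroup N] [Module A N]
  [AddCommGroup M'] [Module A M'] [AddCommGroup N'] [Module A N']
  [AddCommGroup M''] [Module A M''] [AddCommGroup N''] [Module A N'']

/-- A linear map vanishing on the image of `i` factors through the cokernel `p`. -/
lemma exists_desc_of_exact {i : M' →ₗ[A] M} {p : M →ₗ[A] M''} (hp : Function.Surjective p)
    (he : Function.Exact i p) (f : M →ₗ[A] N) (hf : f ∘ₗ i = 0) :
    ∃ g : M'' →ₗ[A] N, g ∘ₗ p = f := by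
  have hk : LinearMap.ker p ≤ LinearMap.ker f := by
    intro x hx
    obtain ⟨y, rfl⟩ := (he x).1 hx
    exact LinearMap.congr_fun hf y
  refine ⟨(LinearMap.ker p).liftQ f hk ∘ₗ (p.quotKerEquivOfSurjective hp).symm, ?_⟩
  ext x
  have : (p.quotKerEquivOfSurjective hp).symm (p x) = Submodule.Quotient.mk x := by
    rw [LinearEquiv.symm_apply_eq]; rfl
  simp [this]

/-- A linear map killed by `p` factors through the kernel `i`. -/
lemma exists_factor_of_exact {i : M' →ₗ[A] M} {p : M →ₗ[A] M''} (hi : Function.Injective i)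
    (he : Function.Exact i p) (f : N →ₗ[A] M) (hf : p ∘ₗ f = 0) :
    ∃ g : N →ₗ[A] M', i ∘ₗ g = f := by
  refine ⟨(LinearEquiv.ofInjective i hi).symm ∘ₗ
    f.codRestrict (LinearMap.range i) fun x => (he _).1 (LinearMap.congr_fun hf x), ?_⟩
  ext x
  have := congrArg Subtype.val ((LinearEquiv.ofInjective i hi).apply_symm_apply
    (f.codRestrict (LinearMap.range i) (fun x => (he _).1 (LinearMap.congr_fun hf x)) x))
  exact this

/-- Lifting from the extension property for a single projective-like presentation. -/
lemma LiftsAlong.of_presentation {K P : Type} [AddCommGroup K] [Module A K] [AddCommGroup P]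
    [Module A P] [Module.Projective A P] (i : K →ₗ[A] P) (p : P →ₗ[A] M)
    (hp : Function.Surjective p) (he : Function.Exact i p)
    (h : ∀ f : K →ₗ[A] N, ∃ g : P →ₗ[A] N, g ∘ₗ i = f) : LiftsAlong A M N := by
  intro Y Z _ _ _ _ j q hj hq hjq f
  obtain ⟨u, hu⟩ := Module.projective_lifting_property q (f ∘ₗ p) hq
  obtain ⟨v, hv⟩ := exists_factor_of_exact hj hjq (u ∘ₗ i) (by
    rw [← LinearMap.comp_assoc, hu, LinearMap.comp_assoc, he.linearMap_comp_eq_zero,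
      LinearMap.comp_zero])
  obtain ⟨w, hw⟩ := h v
  obtain ⟨g, hg⟩ := exists_desc_of_exact hp he (u - j ∘ₗ w) (by
    rw [LinearMap.sub_comp, LinearMap.comp_assoc, hw, hv, sub_self])
  refine ⟨g, ?_⟩
  ext m
  obtain ⟨x, rfl⟩ := hp m
  have h1 := LinearMap.congr_fun hg x
  have h2 := LinearMap.congr_fun hu x
  simp only [LinearMap.comp_apply, LinearMap.sub_apply] at h1 h2 ⊢
  rw [h1, map_sub, h2, hjq.apply_apply_eq_zero, sub_zero]

lemma LiftsAlong.extendsAlong (h : LiftsAlong A M N) : ExtendsAlong A M N := by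
  intro K P _ _ _ _ i p hi hp he f
  let S : Submodule A (N × P) := LinearMap.range (f.prod (-i))
  let j : N →ₗ[A] (N × P) ⧸ S := S.mkQ ∘ₗ LinearMap.inl A N P
  let q : (N × P) ⧸ S →ₗ[A] M := S.liftQ (p ∘ₗ LinearMap.snd A N P) (by
    rintro _ ⟨k, rfl⟩
    simp [he.apply_apply_eq_zero])
  have hq : ∀ x, q (S.mkQ x) = p x.2 := fun x => rfl
  have hj : Function.Injective j := by
    rw [injective_iff_map_eq_zero]
    intro n hn
    obtain ⟨k, hk⟩ := (Submodule.Quotient.mk_eq_zero S).1 hn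
    have h1 : f k = n := congrArg Prod.fst hk
    have h2 : -i k = 0 := congrArg Prod.snd hk
    rw [neg_eq_zero, map_eq_zero_iff i hi] at h2
    rw [← h1, h2, map_zero]
  have hjq : Function.Exact j q := by
    intro x
    obtain ⟨⟨n, y⟩, rfl⟩ := S.mkQ_surjective x
    rw [hq]
    constructor
    · intro hy
      obtain ⟨k, rfl⟩ := (he y).1 hy
      refine ⟨n + f k, ?_⟩
      refine (Submodule.Quotient.eq S).2 ⟨k, ?_⟩
      simp
    · rintro ⟨m, hm⟩
      rw [← hq, ← hm]
      exact (hq _).trans (map_zero p)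
  obtain ⟨s, hs⟩ := h _ _ j q hj (fun m => by
    obtain ⟨x, rfl⟩ := hp m
    exact ⟨S.mkQ (0, x), hq _⟩) hjq LinearMap.id
  obtain ⟨g, hg⟩ := exists_factor_of_exact hj hjq
    (S.mkQ ∘ₗ LinearMap.inr A N P - s ∘ₗ p) (by
      ext x
      have := LinearMap.congr_fun hs (p x)
      simp only [LinearMap.comp_apply, LinearMap.id_apply] at this
      simp [hq, this, -Submodule.mkQ_apply])
  refine ⟨g, ?_⟩
  ext k
  apply hj
  have := LinearMap.congr_fun hg (i k)
  simp only [LinearMap.comp_apply, LinearMap.sub_apply, he.apply_apply_eq_zero, map_zero,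
    sub_zero] at this ⊢
  rw [this]
  refine (Submodule.Quotient.eq S).2 ⟨-k, ?_⟩
  simp

lemma ExtendsAlong.liftsAlong (h : ExtendsAlong A M N) : LiftsAlong A M N := by
  let p : (M →₀ A) →ₗ[A] M := Finsupp.linearCombination A id
  have hp : Function.Surjective p := Finsupp.linearCombination_id_surjective A M
  have he : Function.Exact (LinearMap.ker p).subtype p := fun x => by simp
  exact .of_presentation _ p hp he (h _ _ _ p (Submodule.subtype_injective _) hp he)

lemma LiftsAlong.of_exact_left {i : M' →ₗ[A] M} {p : M →ₗ[A] M''} (hi : Function.Injective i)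
    (hp : Function.Surjective p) (he : Function.Exact i p) (h' : LiftsAlong A M' N)
    (h'' : LiftsAlong A M'' N) : LiftsAlong A M N := by
  refine ExtendsAlong.liftsAlong fun K P _ _ _ _ j q hj hq hjq f => ?_
  have hker : ∀ x : K, j x ∈ LinearMap.ker (p ∘ₗ q) := fun x => by
    simp [hjq.apply_apply_eq_zero]
  obtain ⟨r, hr⟩ := exists_factor_of_exact hi he (q ∘ₗ (LinearMap.ker (p ∘ₗ q)).subtype) (by
    ext x; exact x.2)
  have hr' : ∀ x : LinearMap.ker (p ∘ₗ q), i (r x) = q x := LinearMap.congr_fun hr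
  obtain ⟨g, hg⟩ := h'.extendsAlong K (LinearMap.ker (p ∘ₗ q)) (j.codRestrict _ hker) r
    (fun a b hab => hj (congrArg Subtype.val hab))
    (fun m => by
      obtain ⟨x, hx⟩ := hq (i m)
      refine ⟨⟨x, ?_⟩, hi ?_⟩
      · simp [hx, he.apply_apply_eq_zero]
      · rw [hr']; exact hx)
    (fun x => by
      rw [← map_eq_zero_iff i hi, hr', hjq]
      constructor
      · rintro ⟨k, hk⟩
        exact ⟨k, Subtype.ext hk⟩
      · rintro ⟨k, hk⟩
        exact ⟨k, congrArg Subtype.val hk⟩) f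
  obtain ⟨e, he'⟩ := h''.extendsAlong _ P (LinearMap.ker (p ∘ₗ q)).subtype (p ∘ₗ q)
    (Submodule.subtype_injective _) (hp.comp hq) (fun x => by simp) g
  refine ⟨e, ?_⟩
  rw [← hg, ← he']
  rfl

lemma LiftsAlong.of_exact_right {i : N' →ₗ[A] N} {p : N →ₗ[A] N''} (hi : Function.Injective i)
    (hp : Function.Surjective p) (he : Function.Exact i p) (h' : LiftsAlong A M N')
    (h'' : LiftsAlong A M N'') : LiftsAlong A M N := by
  intro Y Z _ _ _ _ j q hj hq hjq f
  let S : Submodule A Y := LinearMap.range (j ∘ₗ i)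
  obtain ⟨k, hk⟩ := exists_desc_of_exact hp he (S.mkQ ∘ₗ j) (by
    ext x
    exact (Submodule.Quotient.mk_eq_zero S).2 ⟨x, rfl⟩)
  have hk' : ∀ x, k (p x) = S.mkQ (j x) := LinearMap.congr_fun hk
  let q' : Y ⧸ S →ₗ[A] Z := S.liftQ q (by
    rintro _ ⟨x, rfl⟩
    simp [hjq.apply_apply_eq_zero])
  have hq' : ∀ x, q' (S.mkQ x) = q x := fun x => rfl
  obtain ⟨u, hu⟩ := h'' (Y ⧸ S) Z k q' (by
      rw [injective_iff_map_eq_zero]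
      intro x hx
      obtain ⟨n, rfl⟩ := hp x
      rw [hk'] at hx
      obtain ⟨y, hy⟩ := (Submodule.Quotient.mk_eq_zero S).1 hx
      rw [← hj hy, he.apply_apply_eq_zero])
    (fun z => by
      obtain ⟨y, rfl⟩ := hq z
      exact ⟨S.mkQ y, hq' y⟩)
    (fun x => by
      obtain ⟨y, rfl⟩ := S.mkQ_surjective x
      rw [hq', hjq]
      constructor
      · rintro ⟨n, rfl⟩
        exact ⟨p n, hk' n⟩
      · rintro ⟨n, hn⟩
        obtain ⟨n, rfl⟩ := hp n
        rw [hk'] at hn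
        obtain ⟨x, hx⟩ := (Submodule.Quotient.eq S).1 hn
        refine ⟨n - i x, ?_⟩
        rw [map_sub]
        change j (i x) = _ at hx
        rw [hx, sub_sub_cancel]) f
  obtain ⟨v, hv⟩ := h' Y (Y ⧸ S) (j ∘ₗ i) S.mkQ (hj.comp hi) S.mkQ_surjective
    (fun x => by simp [S]) u
  refine ⟨v, ?_⟩
  rw [← hu, ← hv]
  rfl

lemma LiftsAlong.of_retract_left (i : M →ₗ[A] M') (p : M' →ₗ[A] M) (h : p ∘ₗ i = LinearMap.id)
    (h' : LiftsAlong A M' N) : LiftsAlong A M N := by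
  intro Y Z _ _ _ _ j q hj hq hjq f
  obtain ⟨g, hg⟩ := h' Y Z j q hj hq hjq (f ∘ₗ p)
  exact ⟨g ∘ₗ i, by rw [← LinearMap.comp_assoc, hg, LinearMap.comp_assoc, h, LinearMap.comp_id]⟩

lemma LiftsAlong.of_retract_right (i : N →ₗ[A] N') (p : N' →ₗ[A] N) (h : p ∘ₗ i = LinearMap.id)
    (h' : LiftsAlong A M N') : LiftsAlong A M N := by
  refine ExtendsAlong.liftsAlong fun K P _ _ _ _ j q hj hq hjq f => ?_
  obtain ⟨g, hg⟩ := h'.extendsAlong K P j q hj hq hjq (i ∘ₗ f)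
  exact ⟨p ∘ₗ g, by rw [LinearMap.comp_assoc, hg, ← LinearMap.comp_assoc, h, LinearMap.id_comp]⟩

lemma LiftsAlong.pi_left {ι : Type} [Finite ι] {F : ι → Type} [∀ j, AddCommGroup (F j)]
    [∀ j, Module A (F j)] (h : ∀ j, LiftsAlong A (F j) N) : LiftsAlong A (∀ j, F j) N := by
  classical
  have := Fintype.ofFinite ι
  intro Y Z _ _ _ _ j q hj hq hjq f
  choose g hg using fun k => h k Y Z j q hj hq hjq (f ∘ₗ LinearMap.single A F k)
  refine ⟨LinearMap.lsum A F ℕ g, LinearMap.pi_ext' fun k => ?_⟩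
  rw [← hg k]
  exact congrArg (q ∘ₗ ·) (congrFun ((LinearMap.lsum A F ℕ).symm_apply_apply g) k)

lemma LiftsAlong.pi_right {ι : Type} {F : ι → Type} [∀ j, AddCommGroup (F j)]
    [∀ j, Module A (F j)] (h : ∀ j, LiftsAlong A M (F j)) : LiftsAlong A M (∀ j, F j) := by
  refine ExtendsAlong.liftsAlong fun K P _ _ _ _ j q hj hq hjq f => ?_
  choose g hg using fun k => (h k).extendsAlong K P j q hj hq hjq (LinearMap.proj k ∘ₗ f)
  refine ⟨LinearMap.pi g, ?_⟩
  ext x k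
  exact LinearMap.congr_fun (hg k) x

lemma LiftsAlong.of_subsingleton_left [Subsingleton M] : LiftsAlong A M N :=
  fun _ _ _ _ _ _ _ _ _ _ _ _ => ⟨0, Subsingleton.elim _ _⟩

lemma LiftsAlong.of_subsingleton_right [Subsingleton N] : LiftsAlong A M N :=
  ExtendsAlong.liftsAlong fun _ _ _ _ _ _ _ _ _ _ _ _ => ⟨0, Subsingleton.elim _ _⟩

lemma LiftsAlong.of_extVanish (h : extVanish A M N 1) : LiftsAlong A M N := by
  let Q : ProjectiveResolution (ModuleCat.of A M) := ProjectiveResolution.of _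
  have hQ : ((Q.complex.linearYonedaObj ℤ (ModuleCat.of A N)).ExactAt 1) := by
    rw [HomologicalComplex.exactAt_iff_isZero_homology]
    refine Limits.IsZero.of_iso ?_ (Q.isoExt (R := ℤ) 1 (ModuleCat.of A N)).symm
    have : Subsingleton (((Ext ℤ (ModuleCat.{0} A) 1).obj
      (Opposite.op (ModuleCat.of A M))).obj (ModuleCat.of A N)) := h
    exact ModuleCat.isZero_of_subsingleton _
  rw [HomologicalComplex.exactAt_iff' _ 0 1 2 (by simp) (by simp),
    ShortComplex.moduleCat_exact_iff] at hQ
  have h0 := Q.exact₀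
  rw [ShortComplex.moduleCat_exact_iff_range_eq_ker] at h0
  let e := (HomologicalComplex.singleObjXSelf (ComplexShape.down ℕ) 0
    (ModuleCat.of A M)).toLinearEquiv
  let p : Q.complex.X 0 →ₗ[A] M := e.toLinearMap ∘ₗ (Q.π.f 0).hom
  have hp : Function.Surjective p := e.surjective.comp
    ((ModuleCat.epi_iff_surjective _).1 inferInstance)
  have hpk : LinearMap.ker p = LinearMap.range (Q.complex.d 1 0).hom := by
    rw [LinearEquiv.ker_comp]
    exact h0.symm
  have hproj : Module.Projective A (Q.complex.X 0) :=
    (IsProjective.iff_projective (Q.complex.X 0)).2 (Q.projective 0)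
  refine .of_presentation (LinearMap.ker p).subtype p hp (fun x => by simp) fun f => ?_
  let δ : Q.complex.X 1 →ₗ[A] LinearMap.ker p := (Q.complex.d 1 0).hom.codRestrict _
    fun x => hpk ▸ LinearMap.mem_range_self _ x
  obtain ⟨g, hg⟩ := hQ (ModuleCat.ofHom (f ∘ₗ δ)) (by
    refine ModuleCat.hom_ext (LinearMap.ext fun x => ?_)
    refine (congrArg f (Subtype.ext ?_)).trans (map_zero f)
    exact congrArg (fun k : Q.complex.X 2 ⟶ Q.complex.X 0 => k.hom x)
      (Q.complex.d_comp_d 2 1 0))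
  refine ⟨g.hom, ?_⟩
  ext ⟨x, hx⟩
  rw [hpk] at hx
  obtain ⟨y, rfl⟩ := hx
  have := congrArg (fun k : Q.complex.X 1 ⟶ ModuleCat.of A N => k.hom y) hg
  exact this

end Lifting

section Filtrations

/-- `M` has a finite filtration all of whose factors satisfy `C`. -/
inductive Filt (A : Type) [Ring A] (C : ∀ (X : Type) [AddCommGroup X] [Module A X], Prop) :
    ∀ (M : Type) [AddCommGroup M] [Module A M], Prop
  | zero (M : Type) [AddCommGroup M] [Module A M] [Subsingleton M] : Filt A C M
  | step (M' M X : Type) [AddCommGroup M'] [Module A M'] [AddCommGroup M] [Module A M]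
      [AddCommGroup X] [Module A X] (i : M' →ₗ[A] M) (p : M →ₗ[A] X)
      (hi : Function.Injective i) (hp : Function.Surjective p) (he : Function.Exact i p)
      (hM' : Filt A C M') (hX : C X) : Filt A C M

variable {A : Type} [Ring A] {C D : ∀ (X : Type) [AddCommGroup X] [Module A X], Prop}
variable {M N M' M'' : Type} [AddCommGroup M] [Module A M] [AddCommGroup N] [Module A N]
  [AddCommGroup M'] [Module A M'] [AddCommGroup M''] [Module A M'']

lemma Filt.of_equiv (h : Filt A C M) (e : M ≃ₗ[A] N) : Filt A C N := by
  cases h with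
  | zero =>
    have := e.symm.injective.subsingleton
    exact .zero N
  | step M' _ X i p hi hp he hM' hX =>
    exact .step M' N X (e.toLinearMap ∘ₗ i) (p ∘ₗ e.symm.toLinearMap) (e.injective.comp hi)
      (hp.comp e.symm.surjective) (fun x => by
        simp only [LinearMap.comp_apply, LinearEquiv.coe_coe]
        rw [he]
        simp [LinearEquiv.eq_symm_apply]) hM' hX

lemma Filt.mono (h : Filt A C M)
    (hCD : ∀ (X : Type) [AddCommGroup X] [Module A X], C X → D X) : Filt A D M := by
  induction h with
  | zero M => exact .zero M
  | step M' M X i p hi hp he _ hX ih => exact .step M' M X i p hi hp he ih (hCD X hX)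

lemma Filt.of_factor (h : C M) : Filt A C M :=
  .step PUnit M M 0 LinearMap.id (Function.injective_of_subsingleton _)
    Function.surjective_id (fun x => by simp [eq_comm]) (.zero PUnit) h

lemma Filt.of_exact {i : M' →ₗ[A] M} {p : M →ₗ[A] M''} (hi : Function.Injective i)
    (hp : Function.Surjective p) (he : Function.Exact i p) (h' : Filt A C M')
    (h'' : Filt A C M'') : Filt A C M := by
  induction h'' generalizing M M' with
  | zero M'' =>
    refine h'.of_equiv (LinearEquiv.ofBijective i ⟨hi, fun x => ?_⟩)
    exact (he x).1 (Subsingleton.elim _ _)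
  | step N' M'' X j q hj hq hjq hN' hX ih =>
    obtain ⟨r, hr⟩ := exists_factor_of_exact hj hjq (p ∘ₗ (LinearMap.ker (q ∘ₗ p)).subtype) (by
      ext x; exact x.2)
    have hr' : ∀ x, j (r x) = p x := LinearMap.congr_fun hr
    have hK : Filt A C (LinearMap.ker (q ∘ₗ p)) := by
      refine ih (i := i.codRestrict _ fun x => by simp [he.apply_apply_eq_zero]) (p := r)
        (fun a b hab => hi (congrArg Subtype.val hab)) (fun y => ?_) (fun x => ?_) h'
      · obtain ⟨x, hx⟩ := hp (j y)
        refine ⟨⟨x, ?_⟩, hj ?_⟩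
        · simp [hx, hjq.apply_apply_eq_zero]
        · rw [hr']; exact hx
      · rw [← map_eq_zero_iff j hj, hr', he]
        constructor
        · rintro ⟨k, hk⟩
          exact ⟨k, Subtype.ext hk⟩
        · rintro ⟨k, hk⟩
          exact ⟨k, congrArg Subtype.val hk⟩
    exact .step _ M X _ (q ∘ₗ p) (Submodule.subtype_injective _) (hq.comp hp)
      (fun x => by simp) hK hX

lemma Filt.prod (h : Filt A C M) (h' : Filt A C N) : Filt A C (M × N) :=
  .of_exact (i := LinearMap.inl A M N) (p := LinearMap.snd A M N) LinearMap.inl_injective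
    LinearMap.snd_surjective .inl_snd h h'

lemma Filt.pi {ι : Type} [Finite ι] {F : ι → Type} [∀ j, AddCommGroup (F j)]
    [∀ j, Module A (F j)] (h : ∀ j, Filt A C (F j)) : Filt A C (∀ j, F j) := by
  induction ι using Finite.induction_empty_option with
  | of_equiv e ih => exact (ih fun j => h (e j)).of_equiv (LinearEquiv.piCongrLeft A F e)
  | h_empty => exact .zero _
  | h_option ih =>
    refine (Filt.prod (h none) (ih fun j => h (some j))).of_equiv ?_
    exact (LinearEquiv.piOptionEquivProd A).symm

lemma Filt.ker_of_exact {i : M' →ₗ[A] M} {p : M →ₗ[A] M''} (hi : Function.Injective i)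
    (he : Function.Exact i p) (h : Filt A C M') : Filt A C (LinearMap.ker p) :=
  h.of_equiv ((LinearEquiv.ofInjective i hi).trans
    (LinearEquiv.ofEq _ _ (LinearMap.exact_iff.1 he).symm))

lemma Filt.ker_comp {f : M →ₗ[A] N} {g : N →ₗ[A] M''} (hf : Function.Surjective f)
    (h : Filt A C (LinearMap.ker f)) (h' : Filt A C (LinearMap.ker g)) :
    Filt A C (LinearMap.ker (g ∘ₗ f)) := by
  refine .of_exact (i := Submodule.inclusion (LinearMap.ker_le_ker_comp f g))
    (p := f.restrict fun x hx => hx) (Submodule.inclusion_injective _) ?_ ?_ h h'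
  · rintro ⟨y, hy⟩
    obtain ⟨x, rfl⟩ := hf y
    exact ⟨⟨x, hy⟩, rfl⟩
  · rintro ⟨x, hx⟩
    constructor
    · intro h0
      exact ⟨⟨x, congrArg Subtype.val h0⟩, rfl⟩
    · rintro ⟨⟨y, hy⟩, hxy⟩
      obtain rfl : y = x := congrArg Subtype.val hxy
      exact Subtype.ext hy

lemma LiftsAlong.of_filt_left (hC : ∀ (X : Type) [AddCommGroup X] [Module A X], C X →
    LiftsAlong A X N) (h : Filt A C M) : LiftsAlong A M N := by
  induction h with
  | zero M => exact .of_subsingleton_left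
  | step M' M X i p hi hp he _ hX ih => exact .of_exact_left hi hp he ih (hC X hX)

lemma LiftsAlong.of_filt_right (hC : ∀ (X : Type) [AddCommGroup X] [Module A X], C X →
    LiftsAlong A M X) (h : Filt A C N) : LiftsAlong A M N := by
  induction h with
  | zero M => exact .of_subsingleton_right
  | step M' M X i p hi hp he _ hX ih => exact .of_exact_right hi hp he ih (hC X hX)

lemma Filt.finite (hC : ∀ (X : Type) [AddCommGroup X] [Module A X], C X → Module.Finite A X)
    (h : Filt A C M) : Module.Finite A M := by
  induction h with
  | zero M => infer_instance
  | step M' M X i p hi hp he _ hX ih =>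
    have := hC X hX
    exact .of_exact he hp

/-- `X` is isomorphic to `F(λ) ⊗_R U` with `λ ∈ S` and `U` finitely generated projective. -/
def IsTensorFactor (R : Type) [CommRing R] (A : Type) [Ring A] [Algebra R A] {Λ : Type}
    (F : Λ → Type) [∀ l, AddCommGroup (F l)] [∀ l, Module R (F l)] [∀ l, Module A (F l)]
    [∀ l, IsScalarTower R A (F l)] (S : Set Λ) (X : Type) [AddCommGroup X] [Module A X] : Prop :=
  Nonempty (TensorFactor R A Λ F S X)

variable {R : Type} [CommRing R] [Algebra R A] {Λ : Type}
  {F : Λ → Type} [∀ l, AddCommGroup (F l)] [∀ l, Module R (F l)]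
  [∀ l, Module A (F l)] [∀ l, IsScalarTower R A (F l)] {S : Set Λ}

lemma exists_chain_of_filt (h : Filt A (fun X => IsTensorFactor R A F S X) M) :
    ∃ (n : ℕ) (c : Fin (n + 1) → Submodule A M), c 0 = ⊥ ∧ c (Fin.last n) = ⊤ ∧ Monotone c ∧
    ∀ i : Fin n, IsTensorFactor R A F S
      (↥(c i.succ) ⧸ (Submodule.comap (c i.succ).subtype (c i.castSucc))) := by
  induction h with
  | zero M =>
    exact ⟨0, fun _ => ⊥, rfl, Subsingleton.elim _ _, fun _ _ _ => le_rfl, fun i => i.elim0⟩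
  | step M' M X i p hi hp he _ hX ih =>
    obtain ⟨n, c, h0, hl, hm, hf⟩ := ih
    let c' : Fin (n + 2) → Submodule A M := Fin.snoc (fun j => (c j).map i) ⊤
    have hc : ∀ j : Fin (n + 1), c' j.castSucc = (c j).map i := fun j => by simp [c']
    have hc' : c' (Fin.last (n + 1)) = ⊤ := by simp [c']
    let G (a b : Submodule A M) : Prop :=
      IsTensorFactor R A F S (↥b ⧸ Submodule.comap b.subtype a)
    refine ⟨n + 1, c', ?_, hc', ?_, ?_⟩
    · rw [← Fin.castSucc_zero, hc, h0, Submodule.map_bot]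
    · refine Fin.monotone_iff_le_succ.2 fun j => ?_
      induction j using Fin.lastCases with
      | last => rw [Fin.succ_last, hc']; exact le_top
      | cast j =>
        rw [Fin.succ_castSucc, hc, hc]
        exact Submodule.map_mono (hm (Fin.castSucc_le_succ j))
    · intro j
      change G (c' j.castSucc) (c' j.succ)
      induction j using Fin.lastCases with
      | last =>
        rw [Fin.succ_last, hc', hc, hl]
        obtain ⟨t⟩ := hX
        have hk : Submodule.comap (⊤ : Submodule A M).subtype (Submodule.map i ⊤) =
            LinearMap.ker (p ∘ₗ (⊤ : Submodule A M).subtype) := by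
          ext x
          simp [← he.linearMap_ker_eq]
        exact ⟨{ t with
          iso := (Submodule.quotEquivOfEq _ _ hk).trans ((LinearMap.quotKerEquivOfSurjective
            (p ∘ₗ (⊤ : Submodule A M).subtype) (fun x => by
              obtain ⟨y, rfl⟩ := hp x
              exact ⟨⟨y, trivial⟩, rfl⟩)).trans t.iso) }⟩
      | cast j =>
        rw [Fin.succ_castSucc, hc, hc]
        obtain ⟨t⟩ := hf j
        refine ⟨{ t with iso := (Submodule.Quotient.equiv
          (Submodule.comap (c j.succ).subtype (c j.castSucc)) _
          (Submodule.equivMapOfInjective i hi _) ?_).symm.trans t.iso }⟩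
        ext ⟨_, x, hx, rfl⟩
        simp only [Submodule.mem_map, Submodule.mem_comap, Submodule.subtype_apply]
        constructor
        · rintro ⟨y, hy, hxy⟩
          exact ⟨y, hy, congrArg Subtype.val hxy⟩
        · rintro ⟨y, hy, hxy⟩
          obtain rfl := hi hxy
          exact ⟨⟨y, hx⟩, hy, rfl⟩

lemma filt_of_inFilt [Fintype Λ] [PartialOrder Λ] (h : InFilt R A Λ F S M) :
    Filt A (fun X => IsTensorFactor R A F S X) M := by
  obtain ⟨-, n, c, h0, hl, hm, hf⟩ := h
  have key : ∀ i : Fin (n + 1), Filt A (fun X => IsTensorFactor R A F S X) (c i) := by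
    intro i
    induction i using Fin.induction with
    | zero => rw [h0]; exact .zero _
    | succ i ih =>
      refine .step _ _ _ (Submodule.comap (c i.succ).subtype (c i.castSucc)).subtype
        (Submodule.mkQ _) (Submodule.subtype_injective _) (Submodule.mkQ_surjective _)
        (fun x => by simp) (ih.of_equiv ?_) (hf i)
      exact (Submodule.comapSubtypeEquivOfLe (hm (Fin.castSucc_le_succ i))).symm
  exact (key (Fin.last n)).of_equiv ((LinearEquiv.ofEq _ _ hl).trans Submodule.topEquiv)

end Filtrations

section AdditiveClosure

variable {A : Type} [Ring A]
variable {T P Q M N : Type} [AddCommGroup T] [Module A T] [AddCommGroup P] [Module A P]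
  [AddCommGroup Q] [Module A Q] [AddCommGroup M] [Module A M] [AddCommGroup N] [Module A N]

variable (A T P) in
/-- `P` is a direct summand of a finite power of `T`, expressed by a decomposition of the identity
of `P` as a sum of endomorphisms factoring through `T`. -/
def IsSummandOfPower : Prop :=
  ∃ (ι : Type) (_ : Fintype ι) (e : ι → T →ₗ[A] P) (e' : ι → P →ₗ[A] T),
    ∑ j, e j ∘ₗ e' j = LinearMap.id

lemma IsSummandOfPower.exists_retract (h : IsSummandOfPower A T P) :
    ∃ (ι : Type) (_ : Fintype ι) (i : P →ₗ[A] ι → T) (p : (ι → T) →ₗ[A] P),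
      p ∘ₗ i = LinearMap.id := by
  obtain ⟨ι, _, e, e', h⟩ := h
  refine ⟨ι, ‹_›, LinearMap.pi e', ∑ j, e j ∘ₗ LinearMap.proj j, ?_⟩
  rw [← h]
  ext x
  simp

lemma IsSummandOfPower.liftsAlong_left (h : IsSummandOfPower A T P) (hT : LiftsAlong A T N) :
    LiftsAlong A P N := by
  obtain ⟨ι, _, i, p, hip⟩ := h.exists_retract
  exact .of_retract_left i p hip (.pi_left fun _ => hT)

lemma IsSummandOfPower.liftsAlong_right (h : IsSummandOfPower A T P) (hT : LiftsAlong A M T) :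
    LiftsAlong A M P := by
  obtain ⟨ι, _, i, p, hip⟩ := h.exists_retract
  exact .of_retract_right i p hip (.pi_right fun _ => hT)

lemma IsSummandOfPower.prod (h : IsSummandOfPower A T P) (h' : IsSummandOfPower A T Q) :
    IsSummandOfPower A T (P × Q) := by
  obtain ⟨ι, _, e, e', h⟩ := h
  obtain ⟨κ, _, f, f', h'⟩ := h'
  refine ⟨ι ⊕ κ, inferInstance, Sum.elim (fun j => LinearMap.inl A P Q ∘ₗ e j)
    (fun j => LinearMap.inr A P Q ∘ₗ f j), Sum.elim (fun j => e' j ∘ₗ LinearMap.fst A P Q)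
    (fun j => f' j ∘ₗ LinearMap.snd A P Q), ?_⟩
  refine LinearMap.ext fun x => ?_
  have h1 := LinearMap.congr_fun h x.1
  have h2 := LinearMap.congr_fun h' x.2
  simp only [LinearMap.sum_apply, LinearMap.comp_apply, LinearMap.id_apply] at h1 h2
  refine Prod.ext ?_ ?_
  · simp [Prod.fst_sum, h1]
  · simp [Prod.snd_sum, h2]

lemma IsSummandOfPower.of_equiv (h : IsSummandOfPower A T P) (f : P ≃ₗ[A] Q) :
    IsSummandOfPower A T Q := by
  obtain ⟨ι, _, e, e', h⟩ := h
  refine ⟨ι, ‹_›, fun j => f.toLinearMap ∘ₗ e j, fun j => e' j ∘ₗ f.symm.toLinearMap, ?_⟩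
  ext x
  have := congrArg f (LinearMap.congr_fun h (f.symm x))
  simpa using this

lemma IsSummandOfPower.of_subsingleton [Subsingleton P] : IsSummandOfPower A T P :=
  ⟨Empty, inferInstance, nofun, nofun, Subsingleton.elim _ _⟩

lemma IsSummandOfPower.pow {n : ℕ} (i : P →ₗ[A] T) (p : T →ₗ[A] P) (h : p ∘ₗ i = LinearMap.id) :
    IsSummandOfPower A T (Fin n → P) := by
  refine ⟨Fin n, inferInstance, fun j => LinearMap.single A (fun _ => P) j ∘ₗ p,
    fun j => i ∘ₗ LinearMap.proj j, ?_⟩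
  refine LinearMap.ext fun x => ?_
  have h' : ∀ y, p (i y) = y := LinearMap.congr_fun h
  simp [h', Finset.univ_sum_single]

section FiniteProjective

variable (R : Type) [CommRing R]

/-- `H` is a finitely generated projective `R`-module. -/
structure FiniteProjective (H : Type) [AddCommGroup H] [Module R H] : Prop where
  finite : Module.Finite R H
  projective : Module.Projective R H

variable {R} {H K L : Type} [AddCommGroup H] [Module R H] [AddCommGroup K] [Module R K]
  [AddCommGroup L] [Module R L]

lemma FiniteProjective.of_retract (h : FiniteProjective R K) (i : H →ₗ[R] K) (p : K →ₗ[R] H)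
    (hip : p ∘ₗ i = LinearMap.id) : FiniteProjective R H := by
  have := h.1
  have := h.2
  have hs : Function.Surjective p := fun x => ⟨i x, LinearMap.congr_fun hip x⟩
  exact ⟨.of_surjective p hs, .of_split i p hip⟩

lemma FiniteProjective.of_equiv (h : FiniteProjective R K) (e : K ≃ₗ[R] H) :
    FiniteProjective R H :=
  h.of_retract e.symm.toLinearMap e.toLinearMap (by ext; simp)

lemma FiniteProjective.of_subsingleton [Subsingleton H] : FiniteProjective R H :=
  ⟨inferInstance, inferInstance⟩

lemma FiniteProjective.of_exact {i : H →ₗ[R] K} {p : K →ₗ[R] L} (hi : Function.Injective i)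
    (hp : Function.Surjective p) (he : Function.Exact i p) (hH : FiniteProjective R H)
    (hL : FiniteProjective R L) : FiniteProjective R K := by
  have := hH.1
  have := hH.2
  have := hL.1
  have := hL.2
  obtain ⟨s, hs⟩ := Module.projective_lifting_property p LinearMap.id hp
  refine ⟨.of_exact he hp, ?_⟩
  obtain ⟨r, hr⟩ := exists_factor_of_exact hi he (LinearMap.id - s ∘ₗ p) (by
    rw [LinearMap.comp_sub, ← LinearMap.comp_assoc, hs]; simp)
  refine Module.Projective.of_split (r.prod p) (i.coprod s) ?_
  ext x
  have := LinearMap.congr_fun hr x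
  simp only [LinearMap.comp_apply, LinearMap.sub_apply, LinearMap.id_apply] at this
  simp [this]

lemma FiniteProjective.pi {ι : Type} [Finite ι] (h : FiniteProjective R H) :
    FiniteProjective R (ι → H) := by
  have := h.1
  have := h.2
  obtain ⟨n, f, g, -, -, hfg⟩ := Module.Finite.exists_comp_eq_id_of_projective R H
  have hfree : FiniteProjective R (ι → Fin n → R) := ⟨inferInstance, inferInstance⟩
  refine hfree.of_retract (g.compLeft ι) (f.compLeft ι) ?_
  ext x j
  exact LinearMap.congr_fun hfg (x j)

lemma FiniteProjective.exists_dualBasis (h : FiniteProjective R H) :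
    ∃ (n : ℕ) (u : Fin n → H) (φ : Fin n → H →ₗ[R] R), ∀ x, ∑ j, φ j x • u j = x := by
  have := h.1
  have := h.2
  obtain ⟨n, f, g, -, -, hfg⟩ := Module.Finite.exists_comp_eq_id_of_projective R H
  refine ⟨n, fun j => f (Pi.single j 1), fun j => LinearMap.proj j ∘ₗ g, fun x => ?_⟩
  have hx : f (g x) = x := LinearMap.congr_fun hfg x
  conv_rhs => rw [← hx, pi_eq_sum_univ' (g x)]
  simp [map_sum]

variable [Algebra R A]

/-- Postcomposition as an `R`-linear map between spaces of `A`-linear maps. -/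
def homPostcomp [Module R M] [IsScalarTower R A M] [Module R N] [IsScalarTower R A N]
    (f : M →ₗ[A] N) : (P →ₗ[A] M) →ₗ[R] (P →ₗ[A] N) where
  toFun g := f ∘ₗ g
  map_add' _ _ := LinearMap.comp_add _ _ _
  map_smul' r g := by
    ext x
    exact f.map_smul_of_tower r (g x)

/-- Precomposition as an `R`-linear map between spaces of `A`-linear maps. -/
def homPrecomp [Module R N] [IsScalarTower R A N] (f : P →ₗ[A] M) :
    (M →ₗ[A] N) →ₗ[R] (P →ₗ[A] N) where
  toFun g := g ∘ₗ f
  map_add' _ _ := rfl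
  map_smul' _ _ := rfl

lemma IsSummandOfPower.finiteProjective_left [Module R N] [IsScalarTower R A N]
    (h : IsSummandOfPower A T P) (hT : FiniteProjective R (T →ₗ[A] N)) :
    FiniteProjective R (P →ₗ[A] N) := by
  obtain ⟨ι, _, e, e', h⟩ := h
  refine (hT.pi (ι := ι)).of_retract (LinearMap.pi fun j => homPrecomp (e j))
    (∑ j, homPrecomp (e' j) ∘ₗ LinearMap.proj j) ?_
  ext f x
  have := congrArg f (LinearMap.congr_fun h x)
  simpa [homPrecomp] using this

lemma IsSummandOfPower.finiteProjective_right [Module R T] [IsScalarTower R A T] [Module R P]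
    [IsScalarTower R A P] (h : IsSummandOfPower A T P) (hT : FiniteProjective R (M →ₗ[A] T)) :
    FiniteProjective R (M →ₗ[A] P) := by
  obtain ⟨ι, _, e, e', h⟩ := h
  refine (hT.pi (ι := ι)).of_retract (LinearMap.pi fun j => homPostcomp (e' j))
    (∑ j, homPostcomp (e j) ∘ₗ LinearMap.proj j) ?_
  ext f x
  have := LinearMap.congr_fun h (f x)
  simpa [homPostcomp] using this

variable {C : ∀ (X : Type) [AddCommGroup X] [Module A X], Prop}

lemma Filt.finiteProjective_left [Module R N] [IsScalarTower R A N] (h : Filt A C M)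
    (hC : ∀ (X : Type) [AddCommGroup X] [Module A X], C X → LiftsAlong A X N)
    (hC' : ∀ (X : Type) [AddCommGroup X] [Module A X], C X → FiniteProjective R (X →ₗ[A] N)) :
    FiniteProjective R (M →ₗ[A] N) := by
  induction h with
  | zero M => exact .of_subsingleton
  | step M' M X i p hi hp he _ hX ih =>
    refine .of_exact (i := homPrecomp p) (p := homPrecomp i) (fun f g hfg => ?_) (fun f => ?_)
      (fun f => ?_) (hC' X hX) ih
    · exact (LinearMap.cancel_right hp).1 hfg
    · exact (hC X hX).extendsAlong _ _ i p hi hp he f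
    · constructor
      · exact exists_desc_of_exact hp he f
      · rintro ⟨g, rfl⟩
        change (g ∘ₗ p) ∘ₗ i = 0
        rw [LinearMap.comp_assoc, he.linearMap_comp_eq_zero, LinearMap.comp_zero]

lemma Filt.finiteProjective_right (h : Filt A C N)
    (hC : ∀ (X : Type) [AddCommGroup X] [Module A X], C X → LiftsAlong A M X)
    (hC' : ∀ (X : Type) [AddCommGroup X] [Module A X] [Module R X] [IsScalarTower R A X],
      C X → FiniteProjective R (M →ₗ[A] X)) :
    ∀ [Module R N] [IsScalarTower R A N], FiniteProjective R (M →ₗ[A] N) := by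
  induction h with
  | zero N => exact .of_subsingleton
  | step N' N X i p hi hp he hN' hX ih =>
    intro _ _
    let _ : Module R N' := Module.compHom N' (algebraMap R A)
    let _ : Module R X := Module.compHom X (algebraMap R A)
    have : IsScalarTower R A N' := ⟨fun r a x => by
      rw [Algebra.smul_def, mul_smul]; rfl⟩
    have : IsScalarTower R A X := ⟨fun r a x => by
      rw [Algebra.smul_def, mul_smul]; rfl⟩
    refine .of_exact (i := homPostcomp i) (p := homPostcomp p) (fun f g hfg => ?_) (fun f => ?_)
      (fun f => ?_) ih (hC' X hX)
    · exact (LinearMap.cancel_left hi).1 hfg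
    · exact LiftsAlong.of_filt_right hC hN' _ _ i p hi hp he f
    · constructor
      · exact exists_factor_of_exact hi he f
      · rintro ⟨g, rfl⟩
        change p ∘ₗ (i ∘ₗ g) = 0
        rw [← LinearMap.comp_assoc, he.linearMap_comp_eq_zero, LinearMap.zero_comp]

end FiniteProjective

end AdditiveClosure

section Tensor

variable {R : Type} [CommRing R] {A : Type} [Ring A] [Algebra R A]
variable {N U T : Type} [AddCommGroup N] [Module R N] [Module A N] [IsScalarTower R A N]
  [AddCommGroup U] [Module R U] [AddCommGroup T] [Module A T]

variable (A N) in
/-- Contraction of `N ⊗ U` with a linear form on `U`. -/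
def tensorContract (φ : U →ₗ[R] R) : N ⊗[R] U →ₗ[A] N :=
  (TensorProduct.AlgebraTensorModule.rid R A N).toLinearMap ∘ₗ
    TensorProduct.AlgebraTensorModule.map LinearMap.id φ

@[simp] lemma tensorContract_tmul (φ : U →ₗ[R] R) (n : N) (u : U) :
    tensorContract A N φ (n ⊗ₜ u) = φ u • n := by
  simp [tensorContract]

variable (R A N) in
/-- The map `n ↦ n ⊗ u`. -/
def tensorInsert (u : U) : N →ₗ[A] N ⊗[R] U :=
  (TensorProduct.AlgebraTensorModule.mk R A N U).flip u

@[simp] lemma tensorInsert_apply (u : U) (n : N) : tensorInsert R A N u n = n ⊗ₜ u := rfl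

lemma sum_tensorInsert_comp_tensorContract {n : ℕ} {u : Fin n → U} {φ : Fin n → U →ₗ[R] R}
    (h : ∀ x, ∑ j, φ j x • u j = x) :
    ∑ j, tensorInsert R A N (u j) ∘ₗ tensorContract A N (φ j) = LinearMap.id := by
  refine TensorProduct.AlgebraTensorModule.ext fun x y => ?_
  simp only [LinearMap.sum_apply, LinearMap.comp_apply, tensorContract_tmul, tensorInsert_apply,
    LinearMap.id_apply, TensorProduct.smul_tmul, ← TensorProduct.tmul_sum, h]

lemma isSummandOfPower_tensor (hU : FiniteProjective R U) : IsSummandOfPower A N (N ⊗[R] U) := by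
  obtain ⟨n, u, φ, h⟩ := hU.exists_dualBasis
  exact ⟨Fin n, inferInstance, _, _, sum_tensorInsert_comp_tensorContract h⟩

lemma IsTensorFactor.exists_isSummandOfPower {Λ : Type} {F : Λ → Type}
    [∀ l, AddCommGroup (F l)] [∀ l, Module R (F l)] [∀ l, Module A (F l)]
    [∀ l, IsScalarTower R A (F l)] {S : Set Λ} {X : Type} [AddCommGroup X] [Module A X]
    (h : IsTensorFactor R A F S X) : ∃ l, IsSummandOfPower A (F l) X := by
  obtain ⟨l, -, U, hf, hp, e⟩ := h
  exact ⟨l, (isSummandOfPower_tensor ⟨hf, hp⟩).of_equiv e.symm⟩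

variable [Module R T] [IsScalarTower R A T]

variable (T) in
/-- The isomorphism `Hom_A(T, N) ⊗ U ≃ Hom_A(T, N ⊗ U)` of `End_A(T)ᵒᵖ`-modules, for `U`
finitely generated projective. -/
lemma exists_homTensorEquiv (hU : FiniteProjective R U) :
    Nonempty ((T →ₗ[A] N) ⊗[R] U ≃ₗ[(Module.End A T)ᵐᵒᵖ] (T →ₗ[A] N ⊗[R] U)) := by
  obtain ⟨n, u, φ, h⟩ := hU.exists_dualBasis
  have hid := sum_tensorInsert_comp_tensorContract (A := A) (N := N) h
  let θ : (T →ₗ[A] N) ⊗[R] U →ₗ[(Module.End A T)ᵐᵒᵖ] (T →ₗ[A] N ⊗[R] U) :=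
    ∑ j, Gmap A T (tensorInsert R A N (u j)) ∘ₗ tensorContract (Module.End A T)ᵐᵒᵖ _ (φ j)
  let θ' : (T →ₗ[A] N ⊗[R] U) →ₗ[(Module.End A T)ᵐᵒᵖ] (T →ₗ[A] N) ⊗[R] U :=
    ∑ j, tensorInsert R (Module.End A T)ᵐᵒᵖ _ (u j) ∘ₗ Gmap A T (tensorContract A N (φ j))
  have hθ : ∀ f x, θ (f ⊗ₜ x) = tensorInsert R A N x ∘ₗ f := fun f x => by
    ext t
    conv_rhs => rw [← h x]
    simp [θ, Gmap, TensorProduct.tmul_sum]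
  refine ⟨.ofLinearMap θ θ' ?_ ?_⟩
  · refine LinearMap.ext fun f => LinearMap.ext fun t => ?_
    have := LinearMap.congr_fun hid (f t)
    simp only [LinearMap.sum_apply, LinearMap.comp_apply, LinearMap.id_apply,
      tensorInsert_apply] at this
    simp [θ', hθ, Gmap, this]
  · refine TensorProduct.AlgebraTensorModule.ext fun f x => ?_
    have : ∀ j, Gmap A T (tensorContract A N (φ j)) (tensorInsert R A N x ∘ₗ f) = φ j x • f :=
      fun j => by ext t; simp [Gmap]
    simp only [LinearMap.comp_apply, hθ, LinearMap.id_apply]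
    simp only [θ', LinearMap.sum_apply, LinearMap.comp_apply, this, tensorInsert_apply,
      TensorProduct.smul_tmul, ← TensorProduct.tmul_sum, h]

end Tensor

section Cover

variable {A : Type} [Ring A] {T : Type} [AddCommGroup T] [Module A T]
variable {C : ∀ (X : Type) [AddCommGroup X] [Module A X], Prop}
variable {P X X' X'' Y : Type} [AddCommGroup P] [Module A P] [AddCommGroup X] [Module A X]
  [AddCommGroup X'] [Module A X'] [AddCommGroup X''] [Module A X''] [AddCommGroup Y] [Module A Y]

variable (A T) in
/-- `X` is a quotient of a module in `add T` by a module filtered by `C`. -/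
def HasCover (C : ∀ (X : Type) [AddCommGroup X] [Module A X], Prop) (X : Type) [AddCommGroup X]
    [Module A X] : Prop :=
  ∃ (P : ModuleCat.{0} A) (π : P →ₗ[A] X), IsSummandOfPower A T P ∧ Function.Surjective π ∧
    Filt A C (LinearMap.ker π)

lemma HasCover.of_filt (hL : ∀ (X : Type) [AddCommGroup X] [Module A X], C X → LiftsAlong A T X)
    (hC : ∀ (X : Type) [AddCommGroup X] [Module A X], C X → HasCover A T C X)
    (h : Filt A C X) : HasCover A T C X := by
  induction h with
  | zero X =>
    exact ⟨ModuleCat.of A PUnit, 0, .of_subsingleton, fun x => ⟨0, Subsingleton.elim _ _⟩, .zero _⟩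
  | step X' X W i p hi hp he hX' hW ih =>
    obtain ⟨P', π', hP', hπ', hK'⟩ := ih
    obtain ⟨P'', π'', hP'', hπ'', hK''⟩ := hC W hW
    obtain ⟨g, hg⟩ := hP''.liftsAlong_left (.of_filt_right hL hX') _ _ i p hi hp he π''
    have hg' : ∀ x, p (g x) = π'' x := LinearMap.congr_fun hg
    let π : P' × P'' →ₗ[A] X := (i ∘ₗ π').coprod g
    have hπ : ∀ x, π x = i (π' x.1) + g x.2 := fun x => rfl
    have hpπ : ∀ x, p (π x) = π'' x.2 := fun x => by
      rw [hπ, map_add, he.apply_apply_eq_zero, zero_add, hg']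
    have hlift : ∀ (x : X) (b : P''), p x = π'' b → ∃ a, π (a, b) = x := fun x b hb => by
      obtain ⟨y, hy⟩ := (he (x - g b)).1 (by rw [map_sub, hg', hb, sub_self])
      obtain ⟨a, rfl⟩ := hπ' y
      exact ⟨a, by rw [hπ, hy, sub_add_cancel]⟩
    refine ⟨ModuleCat.of A (P' × P''), π, hP'.prod hP'', fun x => ?_, ?_⟩
    · obtain ⟨b, hb⟩ := hπ'' (p x)
      obtain ⟨a, ha⟩ := hlift x b hb.symm
      exact ⟨_, ha⟩
    · refine .of_exact
        (i := (LinearMap.inl A P' P'').restrict (p := LinearMap.ker π') (q := LinearMap.ker π)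
          fun x hx => ?_)
        (p := (LinearMap.snd A P' P'').restrict (p := LinearMap.ker π) (q := LinearMap.ker π'')
          fun x hx => ?_) ?_ ?_ ?_ hK' hK''
      · rw [LinearMap.mem_ker] at hx
        simp [hπ, hx]
      · rw [LinearMap.mem_ker] at hx ⊢
        rw [LinearMap.snd_apply, ← hpπ, hx, map_zero]
      · intro x y hxy
        exact Subtype.ext (congrArg (fun z => z.1.1) hxy)
      · rintro ⟨b, hb⟩
        obtain ⟨a, ha⟩ := hlift 0 b (by rw [map_zero, LinearMap.mem_ker.1 hb])
        exact ⟨⟨(a, b), ha⟩, rfl⟩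
      · rintro ⟨⟨a, b⟩, hab⟩
        constructor
        · intro hb
          obtain rfl : b = 0 := congrArg Subtype.val hb
          refine ⟨⟨a, ?_⟩, rfl⟩
          rw [LinearMap.mem_ker, hπ, map_zero, add_zero] at hab
          exact hi (hab.trans (map_zero i).symm)
        · rintro ⟨c, hc⟩
          exact Subtype.ext (congrArg (fun z => z.1.2) hc).symm

end Cover

section HomFunctor

variable {A : Type} [Ring A] {T : Type} [AddCommGroup T] [Module A T]
variable {C : ∀ (X : Type) [AddCommGroup X] [Module A X], Prop}
variable {P X X' X'' Y : Type} [AddCommGroup P] [Module A P] [AddCommGroup X] [Module A X]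
  [AddCommGroup X'] [Module A X'] [AddCommGroup X''] [Module A X''] [AddCommGroup Y] [Module A Y]

@[simp] lemma Gmap_apply (f : X →ₗ[A] Y) (g : T →ₗ[A] X) : Gmap A T f g = f ∘ₗ g := rfl

lemma Gmap_comp (f : X →ₗ[A] Y) (g : X' →ₗ[A] X) : Gmap A T (f ∘ₗ g) = Gmap A T f ∘ₗ Gmap A T g :=
  rfl

lemma Gmap_injective {f : X →ₗ[A] Y} (hf : Function.Injective f) :
    Function.Injective (Gmap A T f) := fun _ _ h => (LinearMap.cancel_left hf).1 h

lemma Gmap_surjective {i : X' →ₗ[A] X} {p : X →ₗ[A] X''} (hi : Function.Injective i)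
    (hp : Function.Surjective p) (he : Function.Exact i p) (h : LiftsAlong A T X') :
    Function.Surjective (Gmap A T p) := h _ _ i p hi hp he

lemma Gmap_exact {i : X' →ₗ[A] X} {p : X →ₗ[A] X''} (hi : Function.Injective i)
    (he : Function.Exact i p) : Function.Exact (Gmap A T i) (Gmap A T p) := fun f => by
  constructor
  · exact exists_factor_of_exact hi he f
  · rintro ⟨g, rfl⟩
    rw [Gmap_apply, Gmap_apply, ← LinearMap.comp_assoc, he.linearMap_comp_eq_zero,
      LinearMap.zero_comp]

variable (T) in
/-- `Hom_A(T, -)` on isomorphisms. -/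
def Gequiv (e : X ≃ₗ[A] Y) : (T →ₗ[A] X) ≃ₗ[(Module.End A T)ᵐᵒᵖ] (T →ₗ[A] Y) :=
  .ofLinearMap (Gmap A T e.toLinearMap) (Gmap A T e.symm.toLinearMap) (by ext; simp) (by ext; simp)

lemma Gmap_surjective_of_isSummandOfPower (h : IsSummandOfPower A T P) :
    Function.Surjective (fun f : P →ₗ[A] Y => Gmap A T f) := by
  obtain ⟨ι, _, e, e', h⟩ := h
  intro φ
  refine ⟨∑ j, φ (e j) ∘ₗ e' j, LinearMap.ext fun g => ?_⟩
  have hg : g = ∑ j, MulOpposite.op (e' j ∘ₗ g) • e j := by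
    ext x
    simpa using (LinearMap.congr_fun h (g x)).symm
  conv_rhs => rw [hg, map_sum]
  ext x
  simp

/-- `Hom_A(T, P)` is relatively projective for `P ∈ add T`. -/
lemma IsSummandOfPower.exists_lift (h : IsSummandOfPower A T P) {Z W : Type} [AddCommGroup Z]
    [Module (Module.End A T)ᵐᵒᵖ Z] [AddCommGroup W] [Module (Module.End A T)ᵐᵒᵖ W]
    (q : Z →ₗ[(Module.End A T)ᵐᵒᵖ] W) (hq : Function.Surjective q)
    (φ : (T →ₗ[A] P) →ₗ[(Module.End A T)ᵐᵒᵖ] W) :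
    ∃ ψ : (T →ₗ[A] P) →ₗ[(Module.End A T)ᵐᵒᵖ] Z, q ∘ₗ ψ = φ := by
  obtain ⟨ι, _, e, e', h⟩ := h
  choose z hz using fun j => hq (φ (e j))
  let c (j : ι) : (T →ₗ[A] P) →ₗ[(Module.End A T)ᵐᵒᵖ] (Module.End A T)ᵐᵒᵖ :=
    { toFun g := MulOpposite.op (e' j ∘ₗ g)
      map_add' g g' := by rw [LinearMap.comp_add]; rfl
      map_smul' b g := rfl }
  refine ⟨∑ j, LinearMap.toSpanSingleton _ Z (z j) ∘ₗ c j, LinearMap.ext fun g => ?_⟩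
  have hg : g = ∑ j, c j g • e j := by
    ext x
    simpa [c] using (LinearMap.congr_fun h (g x)).symm
  conv_rhs => rw [hg, map_sum]
  simp [map_sum, hz]

lemma Gmap_eq_zero {π : P →ₗ[A] X} (h : IsSummandOfPower A T P) (hπ : Function.Surjective π)
    {f : X →ₗ[A] Y} (hf : Gmap A T f = 0) : f = 0 := by
  obtain ⟨ι, _, e, e', h⟩ := h
  refine (LinearMap.cancel_right hπ).1 ?_
  have hj : ∀ j, f ∘ₗ π ∘ₗ e j = 0 := fun j => LinearMap.congr_fun hf (π ∘ₗ e j)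
  calc f ∘ₗ π = ∑ j, (f ∘ₗ π ∘ₗ e j) ∘ₗ e' j := by
        ext x
        simpa using congrArg (fun y => f (π y)) (LinearMap.congr_fun h x).symm
    _ = 0 ∘ₗ π := by simp [hj]

lemma Gmap_bijective_of_filt
    (hL : ∀ (X : Type) [AddCommGroup X] [Module A X], C X → LiftsAlong A T X)
    (hC : ∀ (X : Type) [AddCommGroup X] [Module A X], C X → HasCover A T C X)
    (h : Filt A C X) : Function.Bijective (fun f : X →ₗ[A] Y => Gmap A T f) := by
  obtain ⟨P, π, hP, hπ, hK⟩ := HasCover.of_filt hL hC h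
  obtain ⟨Q, ρ, hQ, hρ, -⟩ := HasCover.of_filt hL hC hK
  constructor
  · intro f g hfg
    refine sub_eq_zero.1 (Gmap_eq_zero hP hπ ?_)
    ext1 x
    change (f - g) ∘ₗ x = 0
    rw [LinearMap.sub_comp, sub_eq_zero]
    exact LinearMap.congr_fun hfg x
  · intro φ
    have he : Function.Exact (LinearMap.ker π).subtype π := fun x => by simp
    obtain ⟨f, hf⟩ := Gmap_surjective_of_isSummandOfPower hP (φ ∘ₗ Gmap A T π)
    have hf' : ∀ g : T →ₗ[A] P, f ∘ₗ g = φ (π ∘ₗ g) := LinearMap.congr_fun hf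
    obtain ⟨g, hg⟩ := exists_desc_of_exact hπ he f (Gmap_eq_zero hQ hρ (by
      ext1 x
      rw [Gmap_apply, LinearMap.comp_assoc, hf', ← LinearMap.comp_assoc,
        he.linearMap_comp_eq_zero, LinearMap.zero_comp, map_zero, LinearMap.zero_apply]))
    refine ⟨g, LinearMap.ext fun x => ?_⟩
    obtain ⟨y, rfl⟩ := Gmap_surjective (Submodule.subtype_injective _) hπ he
      (.of_filt_right hL hK) x
    rw [Gmap_apply, Gmap_apply, ← LinearMap.comp_assoc, hg, hf']

/-- An extension of `Hom_A(T, X'')` by `Hom_A(T, X')` comes from an extension of `X''` by `X'`. -/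
lemma exists_extension_of_Gmap_exact
    (hL : ∀ (X : Type) [AddCommGroup X] [Module A X], C X → LiftsAlong A T X)
    (hC : ∀ (X : Type) [AddCommGroup X] [Module A X], C X → HasCover A T C X)
    (h' : Filt A C X') (h'' : C X'') {Z : Type} [AddCommGroup Z] [Module (Module.End A T)ᵐᵒᵖ Z]
    {j : (T →ₗ[A] X') →ₗ[(Module.End A T)ᵐᵒᵖ] Z} {q : Z →ₗ[(Module.End A T)ᵐᵒᵖ] (T →ₗ[A] X'')}
    (hj : Function.Injective j) (hq : Function.Surjective q) (hjq : Function.Exact j q) :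
    ∃ X : ModuleCat.{0} A, Filt A C X ∧
      Nonempty (Z ≃ₗ[(Module.End A T)ᵐᵒᵖ] (T →ₗ[A] X)) := by
  obtain ⟨P, π, hP, hπ, hK⟩ := hC X'' h''
  obtain ⟨ψ, hψ⟩ := hP.exists_lift q hq (Gmap A T π)
  have hψ' : ∀ g, q (ψ g) = π ∘ₗ g := LinearMap.congr_fun hψ
  let κ := (LinearMap.ker π).subtype
  have hκ : Function.Exact κ π := fun x => by simp [κ]
  obtain ⟨m', hm'⟩ := exists_factor_of_exact hj hjq (ψ ∘ₗ Gmap A T κ) (by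
    rw [← LinearMap.comp_assoc, hψ, ← Gmap_comp, hκ.linearMap_comp_eq_zero]; ext; simp)
  obtain ⟨m, hm⟩ := (Gmap_bijective_of_filt hL hC hK (Y := X')).2 m'
  have hm : ∀ g : T →ₗ[A] LinearMap.ker π, j (m ∘ₗ g) = ψ (κ ∘ₗ g) := fun g => by
    rw [← Gmap_apply m g, show Gmap A T m = m' from hm]
    exact LinearMap.congr_fun hm' g
  let s : LinearMap.ker π →ₗ[A] X' × P := m.prod (-κ)
  have hs : Function.Injective s := fun x y hxy => by
    have := congrArg Prod.snd hxy
    exact Subtype.ext (neg_injective this)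
  let X := (X' × P) ⧸ LinearMap.range s
  let t : X' × P →ₗ[A] X := (LinearMap.range s).mkQ
  have ht : Function.Surjective t := Submodule.mkQ_surjective _
  have hst : Function.Exact s t := LinearMap.exact_iff.2 (Submodule.ker_mkQ _)
  let i : X' →ₗ[A] X := t ∘ₗ LinearMap.inl A X' P
  obtain ⟨p, hp⟩ := exists_desc_of_exact ht hst (π ∘ₗ LinearMap.snd A X' P) (by
    ext x; simp [s, κ])
  have hp' : ∀ x, p (t x) = π x.2 := LinearMap.congr_fun hp
  have hX : Filt A C X := by
    refine .step X' X X'' i p (fun x y hxy => ?_) (fun x => ?_) (fun x => ?_) h' h''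
    · obtain ⟨k, hk⟩ := (hst ((x, 0) - (y, 0))).1 (by rw [map_sub, sub_eq_zero]; exact hxy)
      obtain rfl : k = 0 := Subtype.ext (neg_eq_zero.1 (by simpa [s, κ] using congrArg Prod.snd hk))
      have := congrArg Prod.fst hk
      rw [map_zero] at this
      exact (sub_eq_zero.1 this.symm)
    · obtain ⟨y, rfl⟩ := hπ x
      exact ⟨t (0, y), hp' _⟩
    · obtain ⟨⟨x, y⟩, rfl⟩ := ht x
      rw [hp']
      constructor
      · intro hy
        refine ⟨x + m ⟨y, hy⟩, ?_⟩
        refine sub_eq_zero.1 ?_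
        change t (x + m ⟨y, hy⟩, 0) - t (x, y) = 0
        rw [← map_sub]
        exact (hst _).2 ⟨⟨y, hy⟩, by simp [s, κ]⟩
      · rintro ⟨z, hz⟩
        rw [← hp', ← hz]
        exact (hp' _).trans (map_zero π)
  refine ⟨ModuleCat.of A X, hX, ?_⟩
  let w : (T →ₗ[A] X' × P) →ₗ[(Module.End A T)ᵐᵒᵖ] Z :=
    j ∘ₗ Gmap A T (LinearMap.fst A X' P) + ψ ∘ₗ Gmap A T (LinearMap.snd A X' P)
  have hw : ∀ g, w g = j (LinearMap.fst A X' P ∘ₗ g) + ψ (LinearMap.snd A X' P ∘ₗ g) :=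
    fun g => rfl
  have hwlift : ∀ (z : Z) (g : T →ₗ[A] P), q z = π ∘ₗ g → ∃ f : T →ₗ[A] X', w (f.prod g) = z :=
    fun z g hg => by
    obtain ⟨f, hf⟩ := (hjq (z - ψ g)).1 (by rw [map_sub, hψ', hg, sub_self])
    refine ⟨f, ?_⟩
    rw [hw]
    exact (congrArg (· + ψ g) hf).trans (sub_add_cancel _ _)
  have hLK : LiftsAlong A T (LinearMap.ker π) := .of_filt_right hL hK
  have hwsurj : Function.Surjective w := fun z => by
    obtain ⟨g, hg⟩ := Gmap_surjective (Submodule.subtype_injective _) hπ hκ hLK (q z)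
    obtain ⟨f, hf⟩ := hwlift z g hg.symm
    exact ⟨_, hf⟩
  have hwexact : Function.Exact (Gmap A T s) w := fun g => by
    constructor
    · intro hg
      have h2 : π ∘ₗ (LinearMap.snd A X' P ∘ₗ g) = 0 := by
        rw [← hψ', ← sub_eq_zero]
        have := congrArg q hg
        rw [hw, map_add, hjq.apply_apply_eq_zero, zero_add, map_zero] at this
        rw [this, sub_zero]
      obtain ⟨k, hk⟩ := exists_factor_of_exact (Submodule.subtype_injective _) hκ _ h2
      refine ⟨-k, ?_⟩
      have h1 : LinearMap.fst A X' P ∘ₗ g = m ∘ₗ (-k) := hj (by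
        rw [LinearMap.comp_neg, map_neg, hm, hk]
        exact eq_neg_of_add_eq_zero_left (hw g ▸ hg))
      ext x
      · exact (LinearMap.congr_fun h1 x).symm
      · simpa [s, κ] using LinearMap.congr_fun hk x
    · rintro ⟨k, rfl⟩
      rw [hw]
      change j (m ∘ₗ k) + ψ ((-κ) ∘ₗ k) = 0
      rw [hm, LinearMap.neg_comp, map_neg, add_neg_cancel]
  have hGt := Gmap_surjective hs ht hst hLK
  have hker : LinearMap.ker w = LinearMap.ker (Gmap A T t) := by
    rw [LinearMap.exact_iff.1 hwexact, LinearMap.exact_iff.1 (Gmap_exact hs hst)]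
  exact ⟨(w.quotKerEquivOfSurjective hwsurj).symm.trans
    ((Submodule.quotEquivOfEq _ _ hker).trans ((Gmap A T t).quotKerEquivOfSurjective hGt))⟩

lemma exists_equiv_Gobj_of_filt
    (hL : ∀ (X : Type) [AddCommGroup X] [Module A X], C X → LiftsAlong A T X)
    (hC : ∀ (X : Type) [AddCommGroup X] [Module A X], C X → HasCover A T C X)
    {D : ∀ (Z : Type) [AddCommGroup Z] [Module (Module.End A T)ᵐᵒᵖ Z], Prop}
    (hD : ∀ (Z : Type) [AddCommGroup Z] [Module (Module.End A T)ᵐᵒᵖ Z], D Z →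
      ∃ X : ModuleCat.{0} A, C X ∧ Nonempty (Z ≃ₗ[(Module.End A T)ᵐᵒᵖ] (T →ₗ[A] X)))
    {Z : Type} [AddCommGroup Z] [Module (Module.End A T)ᵐᵒᵖ Z]
    (h : Filt (Module.End A T)ᵐᵒᵖ D Z) :
    ∃ X : ModuleCat.{0} A, Filt A C X ∧ Nonempty (Z ≃ₗ[(Module.End A T)ᵐᵒᵖ] (T →ₗ[A] X)) := by
  induction h with
  | zero Z =>
    exact ⟨ModuleCat.of A PUnit, .zero _, ⟨0, 0, fun _ => Subsingleton.elim _ _,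
      fun _ => Subsingleton.elim _ _⟩⟩
  | step Z' Z Q j q hj hq hjq hZ' hQ ih =>
    obtain ⟨X', hX', ⟨e'⟩⟩ := ih
    obtain ⟨X'', hX'', ⟨e''⟩⟩ := hD Q hQ
    refine exists_extension_of_Gmap_exact hL hC hX' hX'' (j := j ∘ₗ e'.symm.toLinearMap)
      (q := e''.toLinearMap ∘ₗ q) (hj.comp e'.symm.injective) (e''.surjective.comp hq) fun x => ?_
    simp only [LinearMap.comp_apply, LinearEquiv.coe_coe, EmbeddingLike.map_eq_zero_iff]
    rw [hjq x]
    exact ⟨fun ⟨y, hy⟩ => ⟨e' y, by simpa using hy⟩, fun ⟨y, hy⟩ => ⟨e'.symm y, hy⟩⟩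

lemma Filt.map_Gobj (hL : ∀ (X : Type) [AddCommGroup X] [Module A X], C X → LiftsAlong A T X)
    {D : ∀ (Z : Type) [AddCommGroup Z] [Module (Module.End A T)ᵐᵒᵖ Z], Prop}
    (hD : ∀ (X : Type) [AddCommGroup X] [Module A X], C X → D (T →ₗ[A] X))
    (h : Filt A C X) : Filt (Module.End A T)ᵐᵒᵖ D (T →ₗ[A] X) := by
  induction h with
  | zero X => exact .zero _
  | step X' X W i p hi hp he hX' hW ih =>
    exact .step _ _ _ (Gmap A T i) (Gmap A T p) (Gmap_injective hi)
      (Gmap_surjective hi hp he (.of_filt_right hL hX')) (Gmap_exact hi he) ih (hD W hW)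

end HomFunctor

section TensorCover

variable {R : Type} [CommRing R] {A : Type} [Ring A] [Algebra R A] {Λ : Type}
  {F : Λ → Type} [∀ l, AddCommGroup (F l)] [∀ l, Module R (F l)]
  [∀ l, Module A (F l)] [∀ l, IsScalarTower R A (F l)] {S S' : Set Λ}
variable {T X : Type} [AddCommGroup T] [Module A T]
  [AddCommGroup X] [Module A X]

lemma IsTensorFactor.self {l : Λ} (hl : l ∈ S) : IsTensorFactor R A F S (F l) :=
  ⟨⟨l, hl, ModuleCat.of R R, inferInstanceAs (Module.Finite R R),
    inferInstanceAs (Module.Projective R R), (TensorProduct.AlgebraTensorModule.rid R A (F l)).symm⟩⟩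

lemma IsTensorFactor.mono (hS : S ⊆ S') (h : IsTensorFactor R A F S X) :
    IsTensorFactor R A F S' X := by
  obtain ⟨l, hl, U, hf, hp, e⟩ := h
  exact ⟨⟨l, hS hl, U, hf, hp, e⟩⟩

lemma IsTensorFactor.finite (hF : ∀ l, Module.Finite A (F l)) (h : IsTensorFactor R A F S X) :
    Module.Finite A X := by
  obtain ⟨l, hl⟩ := h.exists_isSummandOfPower
  obtain ⟨ι, _, i, p, hip⟩ := hl.exists_retract
  have := hF l
  exact .of_surjective p fun x => ⟨i x, LinearMap.congr_fun hip x⟩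

lemma inFilt_of_filt [Fintype Λ] [PartialOrder Λ] (hF : ∀ l, Module.Finite A (F l))
    (h : Filt A (fun X => IsTensorFactor R A F S X) X) : InFilt R A Λ F S X :=
  ⟨h.finite fun _ _ _ hX => hX.finite hF, exists_chain_of_filt h⟩

variable (R A) in
/-- `N ⊗ Rⁿ ≃ Nⁿ`, linearly over an `R`-algebra acting on `N`. -/
def tensorPiEquiv (N : Type) [AddCommGroup N] [Module R N] [Module A N] [IsScalarTower R A N]
    (n : ℕ) : N ⊗[R] (Fin n → R) ≃ₗ[A] (Fin n → N) :=
  { TensorProduct.piScalarRight R R N (Fin n) with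
    map_smul' := fun a x => by
      dsimp
      induction x with
      | zero => simp
      | add x y hx hy => simp only [smul_add, map_add, hx, hy]
      | tmul x y =>
        ext j
        simp [TensorProduct.smul_tmul', smul_comm a (y j)] }

variable (F) in
lemma filt_ker_tensorMap {l : Λ} (hl : l ∈ S) {V U : Type} [AddCommGroup V] [Module R V]
    [AddCommGroup U] [Module R U] (hV : FiniteProjective R V) (hU : FiniteProjective R U)
    {f : V →ₗ[R] U} (hf : Function.Surjective f) :
    Filt A (fun X => IsTensorFactor R A F S X)
      (LinearMap.ker (TensorProduct.AlgebraTensorModule.map (LinearMap.id : F l →ₗ[A] F l) f)) := by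
  have := hU.2
  have he : Function.Exact (LinearMap.ker f).subtype f := fun x => by simp
  obtain ⟨s, hs⟩ := Module.projective_lifting_property f LinearMap.id hf
  obtain ⟨r, hr⟩ := exists_factor_of_exact (Submodule.subtype_injective _) he
    (LinearMap.id - s ∘ₗ f) (by rw [LinearMap.comp_sub, ← LinearMap.comp_assoc, hs]; simp)
  have hr' : r ∘ₗ (LinearMap.ker f).subtype = LinearMap.id := by
    ext x
    simpa [LinearMap.mem_ker.1 x.2] using LinearMap.congr_fun hr x
  have hK := hV.of_retract _ r hr'
  have he' : Function.Exact (TensorProduct.AlgebraTensorModule.map (LinearMap.id : F l →ₗ[A] F l)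
      (LinearMap.ker f).subtype)
      (TensorProduct.AlgebraTensorModule.map (LinearMap.id : F l →ₗ[A] F l) f) :=
    fun x => lTensor_exact (F l) he hf x
  refine .ker_of_exact ?_ he'
    (.of_factor ⟨⟨l, hl, ModuleCat.of R (LinearMap.ker f), hK.1, hK.2, .refl A _⟩⟩)
  refine Function.LeftInverse.injective (g := TensorProduct.AlgebraTensorModule.map
    (LinearMap.id : F l →ₗ[A] F l) r) fun x => ?_
  rw [← LinearMap.comp_apply, ← TensorProduct.AlgebraTensorModule.map_comp, hr',
    LinearMap.id_comp, TensorProduct.AlgebraTensorModule.map_id, LinearMap.id_apply]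

/-- If each `F l` has a cover by a summand of `T`, then so has each `F l ⊗ U`. -/
lemma IsTensorFactor.hasCover {T' : Λ → Type} [∀ l, AddCommGroup (T' l)] [∀ l, Module A (T' l)]
    (i : ∀ l, T' l →ₗ[A] T) (p : ∀ l, T →ₗ[A] T' l) (hip : ∀ l, p l ∘ₗ i l = LinearMap.id)
    (g : ∀ l, T' l →ₗ[A] F l) (hg : ∀ l, Function.Surjective (g l))
    (hK : ∀ l ∈ S, Filt A (fun X => IsTensorFactor R A F S X) (LinearMap.ker (g l)))
    (h : IsTensorFactor R A F S X) :
    HasCover A T (fun X => IsTensorFactor R A F S X) X := by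
  obtain ⟨l, hl, U, hUf, hUp, e⟩ := h
  have hU : FiniteProjective R U := ⟨hUf, hUp⟩
  obtain ⟨n, f, hf⟩ := Module.Finite.exists_fin' R U
  let a : (Fin n → T' l) →ₗ[A] (Fin n → F l) := (g l).compLeft (Fin n)
  have ha : Function.Surjective a := fun x => by
    choose y hy using fun j => hg l (x j)
    exact ⟨y, funext hy⟩
  let b : F l ⊗[R] (Fin n → R) →ₗ[A] F l ⊗[R] U := TensorProduct.AlgebraTensorModule.map .id f
  have hb : Function.Surjective b := LinearMap.lTensor_surjective (F l) hf
  let c : (Fin n → F l) ≃ₗ[A] F l ⊗[R] (Fin n → R) := (tensorPiEquiv R A (F l) n).symm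
  have hKa : Filt A (fun X => IsTensorFactor R A F S X) (LinearMap.ker a) := by
    refine .ker_of_exact (i := (LinearMap.ker (g l)).subtype.compLeft (Fin n))
      (fun x y hxy => ?_) (fun x => ⟨fun hx => ?_, ?_⟩) (.pi fun _ => hK l hl)
    · exact funext fun j => Subtype.ext (congrFun hxy j)
    · exact ⟨fun j => ⟨x j, congrFun hx j⟩, rfl⟩
    · rintro ⟨y, rfl⟩
      exact funext fun j => (y j).2
  refine ⟨ModuleCat.of A (Fin n → T' l), e.symm.toLinearMap ∘ₗ (b ∘ₗ (c.toLinearMap ∘ₗ a)),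
    .pow (i l) (p l) (hip l), e.symm.surjective.comp (hb.comp (c.surjective.comp ha)), ?_⟩
  rw [LinearEquiv.ker_comp]
  refine .ker_comp (c.surjective.comp ha) ?_
    (filt_ker_tensorMap F hl ⟨inferInstance, inferInstance⟩ hU hf)
  rw [LinearEquiv.ker_comp]
  exact hKa

end TensorCover

section SplitQuasiHereditary

variable {R : Type} [CommRing R] {A : Type} [Ring A] [Algebra R A] {Λ : Type}
variable {Δ : Λ → Type} [∀ l, AddCommGroup (Δ l)] [∀ l, Module R (Δ l)]
  [∀ l, Module A (Δ l)] [∀ l, IsScalarTower R A (Δ l)]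
variable {N : Λ → Type} [∀ l, AddCommGroup (N l)] [∀ l, Module R (N l)]
  [∀ l, Module A (N l)] [∀ l, IsScalarTower R A (N l)]
variable {S S' : Set Λ} {X Y : Type} [AddCommGroup X] [Module A X] [AddCommGroup Y] [Module A Y]

lemma liftsAlong_of_isTensorFactor (h : ∀ l m, LiftsAlong A (Δ l) (N m))
    (hX : IsTensorFactor R A Δ S X) (hY : IsTensorFactor R A N S' Y) : LiftsAlong A X Y := by
  obtain ⟨l, hl⟩ := hX.exists_isSummandOfPower
  obtain ⟨m, hm⟩ := hY.exists_isSummandOfPower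
  exact hl.liftsAlong_left (hm.liftsAlong_right (h l m))

lemma liftsAlong_of_filt (h : ∀ l m, LiftsAlong A (Δ l) (N m))
    (hX : Filt A (fun X => IsTensorFactor R A Δ S X) X)
    (hY : Filt A (fun X => IsTensorFactor R A N S' X) Y) : LiftsAlong A X Y :=
  .of_filt_left (fun _ _ _ hX => .of_filt_right
    (fun _ _ _ hY => liftsAlong_of_isTensorFactor h hX hY) hY) hX

lemma finiteProjective_hom_of_filt (h : ∀ l m, LiftsAlong A (Δ l) (N m))
    (h' : ∀ l m, FiniteProjective R (Δ l →ₗ[A] N m))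
    (hX : Filt A (fun X => IsTensorFactor R A Δ S X) X)
    (hY : Filt A (fun X => IsTensorFactor R A N S' X) Y)
    [Module R Y] [IsScalarTower R A Y] : FiniteProjective R (X →ₗ[A] Y) := by
  refine hX.finiteProjective_left
    (fun X _ _ hX => .of_filt_right (fun _ _ _ hY => liftsAlong_of_isTensorFactor h hX hY) hY)
    fun X _ _ hX => hY.finiteProjective_right
    (fun _ _ _ hY => liftsAlong_of_isTensorFactor h hX hY) fun Y _ _ _ _ hY => ?_
  obtain ⟨l, hl⟩ := hX.exists_isSummandOfPower
  obtain ⟨m, hm⟩ := hY.exists_isSummandOfPower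
  exact hl.finiteProjective_left (hm.finiteProjective_right (h' l m))

variable [PartialOrder Λ]

lemma IsCostandard.liftsAlong (hc : IsCostandard R A Λ Δ N) (l m : Λ) :
    LiftsAlong A (Δ l) (N m) := .of_extVanish (hc.2.2.2 l m 1 one_pos)

lemma IsCostandard.finiteProjective_hom (hc : IsCostandard R A Λ Δ N) (l m : Λ) :
    FiniteProjective R (Δ l →ₗ[A] N m) := by
  obtain rfl | hlm := eq_or_ne l m
  · obtain ⟨e⟩ := hc.2.1 l
    exact FiniteProjective.of_equiv ⟨inferInstance, inferInstance⟩ e.symm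
  · have : Subsingleton (Δ l →ₗ[A] N m) :=
      ⟨fun f g => (hc.2.2.1 l m hlm f).trans (hc.2.2.1 l m hlm g).symm⟩
    exact .of_subsingleton

variable [Fintype Λ]

lemma SplitQH.filt_P (h : SplitQH R A Λ Δ) (l : Λ) :
    Filt A (fun X => IsTensorFactor R A Δ Set.univ X) (h.P l) :=
  .step _ _ _ _ _ (Submodule.subtype_injective _) (h.epi_surj l) (fun x => by simp)
    ((filt_of_inFilt (h.ker_filt l)).mono fun _ _ _ hX => hX.mono (Set.subset_univ _))
    (.self (Set.mem_univ l))

/-- Costandard modules are finitely generated projective over the ground ring. -/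
lemma SplitQH.finiteProjective_costandard (h : SplitQH R A Λ Δ) (hc : IsCostandard R A Λ Δ N)
    (l : Λ) : FiniteProjective R (N l) := by
  obtain ⟨n, i, p, hip⟩ := h.add_gen (ModuleCat.of A A) (inferInstanceAs (Module.Finite A A))
    (inferInstanceAs (Module.Projective A A))
  have hP : FiniteProjective R ((Fin n → ∀ l, (h.P l : Type)) →ₗ[A] N l) :=
    finiteProjective_hom_of_filt hc.liftsAlong hc.finiteProjective_hom
      (.pi fun _ => .pi h.filt_P) (.of_factor (.self (Set.mem_univ l)))
  refine (hP.of_retract (H := A →ₗ[A] N l) (homPrecomp p) (homPrecomp i) ?_).of_equiv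
    (LinearMap.ringLmapEquivSelf A R (N l))
  ext1 f
  change (f ∘ₗ p) ∘ₗ i = f
  rw [LinearMap.comp_assoc]
  exact congrArg (f ∘ₗ ·) hip

variable {T : Λ → Type} [∀ l, AddCommGroup (T l)] [∀ l, Module A (T l)]

lemma IsCharTilting.filt_standard (hT : IsCharTilting R A Λ Δ N T) (l : Λ) :
    Filt A (fun X => IsTensorFactor R A Δ Set.univ X) (T l) := by
  obtain ⟨f, hf, hX⟩ := (hT l).1
  exact .of_exact hf (Submodule.mkQ_surjective _) (LinearMap.exact_iff.2 (Submodule.ker_mkQ _))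
    (.of_factor (.self (Set.mem_univ l)))
    ((filt_of_inFilt hX).mono fun _ _ _ hX => hX.mono (Set.subset_univ _))

lemma IsCharTilting.filt_costandard (hT : IsCharTilting R A Λ Δ N T) (l : Λ) :
    Filt A (fun X => IsTensorFactor R A N Set.univ X) (T l) := by
  obtain ⟨g, hg, hY⟩ := (hT l).2
  exact .step _ _ _ _ g (Submodule.subtype_injective _) hg (fun x => by simp)
    ((filt_of_inFilt hY).mono fun _ _ _ hX => hX.mono (Set.subset_univ _))
    (.self (Set.mem_univ l))

end SplitQuasiHereditary

section RingelDualModules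

variable {R : Type} [CommRing R] {A : Type} [Ring A] [Algebra R A]
variable {T : Type} [AddCommGroup T] [Module A T] [Module R T] [IsScalarTower R A T]

section Factors

variable {Λ : Type} {N : Λ → Type} [∀ l, AddCommGroup (N l)] [∀ l, Module R (N l)]
  [∀ l, Module A (N l)] [∀ l, IsScalarTower R A (N l)] {S : Set Λ}
  {X : Type} [AddCommGroup X] [Module A X]

variable (T) in
lemma IsTensorFactor.map_Gobj (h : IsTensorFactor R A N S X) :
    IsTensorFactor R (Module.End A T)ᵐᵒᵖ (fun l : Λᵒᵈ => (T →ₗ[A] N (OrderDual.ofDual l)))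
      (OrderDual.ofDual ⁻¹' S) (T →ₗ[A] X) := by
  obtain ⟨l, hl, U, hf, hp, e⟩ := h
  obtain ⟨e'⟩ := exists_homTensorEquiv (R := R) (A := A) T (N := N l) (U := U) ⟨hf, hp⟩
  exact ⟨⟨OrderDual.toDual l, hl, U, hf, hp, (Gequiv T e).trans e'.symm⟩⟩

lemma IsTensorFactor.exists_equiv_Gobj {Z : Type} [AddCommGroup Z]
    [Module (Module.End A T)ᵐᵒᵖ Z]
    (h : IsTensorFactor R (Module.End A T)ᵐᵒᵖ
      (fun l : Λᵒᵈ => (T →ₗ[A] N (OrderDual.ofDual l))) (OrderDual.ofDual ⁻¹' S) Z) :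
    ∃ X : ModuleCat.{0} A, IsTensorFactor R A N S X ∧
      Nonempty (Z ≃ₗ[(Module.End A T)ᵐᵒᵖ] (T →ₗ[A] X)) := by
  obtain ⟨l, hl, U, hf, hp, e⟩ := h
  obtain ⟨e'⟩ := exists_homTensorEquiv (R := R) (A := A) T (N := N (OrderDual.ofDual l)) (U := U) ⟨hf, hp⟩
  exact ⟨ModuleCat.of A (N (OrderDual.ofDual l) ⊗[R] U),
    ⟨⟨OrderDual.ofDual l, hl, U, hf, hp, .refl A _⟩⟩, ⟨e.trans e'⟩⟩

end Factors

section Retract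

variable {A : Type} [Ring A] {T T' : Type} [AddCommGroup T] [Module A T] [AddCommGroup T']
  [Module A T'] {i : T' →ₗ[A] T} {p : T →ₗ[A] T'}

lemma exists_Gobj_retract (h : p ∘ₗ i = LinearMap.id) :
    ∃ (u : (T →ₗ[A] T') →ₗ[(Module.End A T)ᵐᵒᵖ] (Module.End A T)ᵐᵒᵖ)
      (v : (Module.End A T)ᵐᵒᵖ →ₗ[(Module.End A T)ᵐᵒᵖ] (T →ₗ[A] T')), v ∘ₗ u = LinearMap.id := by
  refine ⟨{ toFun g := MulOpposite.op (i ∘ₗ g)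
            map_add' g g' := by rw [LinearMap.comp_add]; rfl
            map_smul' b g := rfl }, LinearMap.toSpanSingleton _ _ p, LinearMap.ext fun g => ?_⟩
  ext x
  exact LinearMap.congr_fun h (g x)

lemma projective_Gobj (h : p ∘ₗ i = LinearMap.id) :
    Module.Projective (Module.End A T)ᵐᵒᵖ (T →ₗ[A] T') := by
  obtain ⟨u, v, h⟩ := exists_Gobj_retract h
  exact .of_split u v h

lemma finite_Gobj (h : p ∘ₗ i = LinearMap.id) :
    Module.Finite (Module.End A T)ᵐᵒᵖ (T →ₗ[A] T') := by
  obtain ⟨u, v, h⟩ := exists_Gobj_retract h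
  exact .of_surjective v fun x => ⟨u x, LinearMap.congr_fun h x⟩

/-- The modules `Hom_A(T, T i)` generate the projective modules over the endomorphism ring of
`T = ∏ T i`. -/
lemma inAdd_Gobj_pi {Λ : Type} (T : Λ → Type) [∀ l, AddCommGroup (T l)] [∀ l, Module A (T l)]
    {Q : Type} [AddCommGroup Q] [Module (Module.End A (∀ l, T l))ᵐᵒᵖ Q]
    [Module.Finite (Module.End A (∀ l, T l))ᵐᵒᵖ Q]
    [Module.Projective (Module.End A (∀ l, T l))ᵐᵒᵖ Q] :
    InAdd (Module.End A (∀ l, T l))ᵐᵒᵖ (∀ l : Λ, (∀ l, T l) →ₗ[A] T l) Q := by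
  obtain ⟨n, f, g, -, -, hfg⟩ :=
    Module.Finite.exists_comp_eq_id_of_projective (Module.End A (∀ l, T l))ᵐᵒᵖ Q
  let u : (Module.End A (∀ l, T l))ᵐᵒᵖ →ₗ[(Module.End A (∀ l, T l))ᵐᵒᵖ]
      (∀ l : Λ, (∀ l, T l) →ₗ[A] T l) :=
    LinearMap.pi fun l => LinearMap.toSpanSingleton _ _ (LinearMap.proj l)
  let v : (∀ l : Λ, (∀ l, T l) →ₗ[A] T l) →ₗ[(Module.End A (∀ l, T l))ᵐᵒᵖ]
      (Module.End A (∀ l, T l))ᵐᵒᵖ :=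
    { toFun x := MulOpposite.op (LinearMap.pi x)
      map_add' x y := rfl
      map_smul' b x := rfl }
  refine ⟨n, u.compLeft (Fin n) ∘ₗ g, f ∘ₗ v.compLeft (Fin n), LinearMap.ext fun x => ?_⟩
  exact LinearMap.congr_fun hfg x

end Retract

section Dual

variable {M N : Type} [AddCommGroup M] [Module R M] [Module A M] [IsScalarTower R A M]
  [AddCommGroup N] [Module R N] [Module A N] [IsScalarTower R A N]

variable (R) in
/-- The transpose of an `A`-linear map, as a map of right `A`-modules. -/
def dualMapOp (f : M →ₗ[A] N) : (N →ₗ[R] R) →ₗ[Aᵐᵒᵖ] (M →ₗ[R] R) where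
  toFun g := g ∘ₗ f.restrictScalars R
  map_add' _ _ := rfl
  map_smul' a g := by
    ext m
    simp

@[simp] lemma dualMapOp_apply (f : M →ₗ[A] N) (g : N →ₗ[R] R) (m : M) :
    dualMapOp R f g m = g (f m) := rfl

lemma dualMapOp_injective (hN : FiniteProjective R N) :
    Function.Injective (dualMapOp R : (M →ₗ[A] N) → _) := fun f g hfg => by
  have := hN.2
  ext m
  rw [← sub_eq_zero, ← Module.forall_dual_apply_eq_zero_iff R]
  intro φ
  rw [map_sub, sub_eq_zero]
  exact LinearMap.congr_fun (LinearMap.congr_fun hfg φ) m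

/-- If the dual of `N` has only scalar endomorphisms, then so has `N`. -/
lemma algebraMap_end_bijective_of_dual (hN : FiniteProjective R N)
    (h : Nonempty (Module.End Aᵐᵒᵖ (N →ₗ[R] R) ≃ₐ[R] R)) :
    Function.Bijective (algebraMap R (Module.End A N)) := by
  obtain ⟨e⟩ := h
  have hr : ∀ r, dualMapOp R (algebraMap R (Module.End A N) r) =
      algebraMap R (Module.End Aᵐᵒᵖ (N →ₗ[R] R)) r := fun r => by
    ext g m
    simp
  have he : ∀ r, e (algebraMap R (Module.End Aᵐᵒᵖ (N →ₗ[R] R)) r) = r := e.commutes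
  constructor
  · intro r s hrs
    rw [← he r, ← hr, hrs, hr, he]
  · intro f
    refine ⟨e (dualMapOp R f), dualMapOp_injective hN ?_⟩
    rw [hr]
    exact e.injective (he _)

end Dual

lemma nonempty_end_Gobj_equiv {N : Type} [AddCommGroup N] [Module R N] [Module A N]
    [IsScalarTower R A N] (hG : Function.Bijective (fun f : N →ₗ[A] N => Gmap A T f))
    (h : Function.Bijective (algebraMap R (Module.End A N))) :
    Nonempty (Module.End (Module.End A T)ᵐᵒᵖ (T →ₗ[A] N) ≃ₐ[R] R) := by
  have : ⇑(Algebra.ofId R (Module.End (Module.End A T)ᵐᵒᵖ (T →ₗ[A] N))) =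
      (fun f : N →ₗ[A] N => Gmap A T f) ∘ algebraMap R (Module.End A N) := by
    ext r f x
    simp [Algebra.ofId_apply]
  exact ⟨(AlgEquiv.ofBijective (Algebra.ofId R _) (this ▸ hG.comp h)).symm⟩

end RingelDualModules

/-- Let `T` be a characteristic tilting module of `(A, {Δ(λ)})` and
`B = End_A(T)^op`. Then `Hom_A(T, −)` restricts to an exact equivalence between `F(∇̃)`
over `A` and `F(Δ̃_B)` over `B`, where `Δ_B(λ) = Hom_A(T, ∇(λ))`; moreover
`(B, {Δ_B(λ)}_{λ ∈ Λ^op})` is a split quasi-hereditary `R`-algebra for the opposite order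
on `Λ`. -/
theorem ringel_dual_functor_equivalence
    (R : Type) [CommRing R] [IsNoetherianRing R]
    (A : Type) [Ring A] [Algebra R A]
    (Λ : Type) [Fintype Λ] [PartialOrder Λ]
    (Δ : Λ → Type) [∀ l, AddCommGroup (Δ l)] [∀ l, Module R (Δ l)]
    [∀ l, Module A (Δ l)] [∀ l, IsScalarTower R A (Δ l)]
    (Nb : Λ → Type) [∀ l, AddCommGroup (Nb l)] [∀ l, Module R (Nb l)]
    [∀ l, Module A (Nb l)] [∀ l, IsScalarTower R A (Nb l)]
    (h : SplitQH R A Λ Δ) (hc : IsCostandard R A Λ Δ Nb)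
    (T : Λ → Type) [∀ l, AddCommGroup (T l)] [∀ l, Module R (T l)]
    [∀ l, Module A (T l)] [∀ l, IsScalarTower R A (T l)]
    (hT : IsCharTilting R A Λ Δ Nb T) :
    -- `Hom_A(T, −)` maps `F(∇̃)` to `F(Δ̃_B)`
    (∀ (X : Type) [AddCommGroup X] [Module A X], InFilt R A Λ Nb Set.univ X →
      InFilt R (Module.End A (∀ i, T i))ᵐᵒᵖ Λᵒᵈ
        (fun l => ((∀ i, T i) →ₗ[A] Nb (OrderDual.ofDual l))) Set.univ
        ((∀ i, T i) →ₗ[A] X)) ∧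
    -- it is fully faithful on `F(∇̃)`
    (∀ (X Y : Type) [AddCommGroup X] [Module A X] [AddCommGroup Y] [Module A Y],
      InFilt R A Λ Nb Set.univ X → InFilt R A Λ Nb Set.univ Y →
      Function.Bijective (fun f : X →ₗ[A] Y => Gmap A (∀ i, T i) f)) ∧
    -- it is dense onto `F(Δ̃_B)`
    (∀ (Z : Type) [AddCommGroup Z] [Module (Module.End A (∀ i, T i))ᵐᵒᵖ Z],
      InFilt R (Module.End A (∀ i, T i))ᵐᵒᵖ Λᵒᵈ
        (fun l => ((∀ i, T i) →ₗ[A] Nb (OrderDual.ofDual l))) Set.univ Z →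
      ∃ X : ModuleCat.{0} A, InFilt R A Λ Nb Set.univ X ∧
        Nonempty (Z ≃ₗ[(Module.End A (∀ i, T i))ᵐᵒᵖ] ((∀ i, T i) →ₗ[A] X))) ∧
    -- it is exact on short exact sequences in `F(∇̃)`
    (∀ (X Y Z : Type) [AddCommGroup X] [Module A X] [AddCommGroup Y] [Module A Y]
      [AddCommGroup Z] [Module A Z] (f : X →ₗ[A] Y) (g : Y →ₗ[A] Z),
      InFilt R A Λ Nb Set.univ X → InFilt R A Λ Nb Set.univ Y →
      InFilt R A Λ Nb Set.univ Z →
      Function.Injective f → Function.Surjective g → Function.Exact f g →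
      (Function.Injective (Gmap A (∀ i, T i) f) ∧
        Function.Surjective (Gmap A (∀ i, T i) g) ∧
        Function.Exact (Gmap A (∀ i, T i) f) (Gmap A (∀ i, T i) g))) ∧
    -- `(B, {Δ_B(λ)})` is split quasi-hereditary with the opposite order
    Nonempty (SplitQH R (Module.End A (∀ i, T i))ᵐᵒᵖ Λᵒᵈ
      (fun l => ((∀ i, T i) →ₗ[A] Nb (OrderDual.ofDual l)))) := by
  let Tt := ∀ i, T i
  have hN : ∀ l, FiniteProjective R (Nb l) := h.finiteProjective_costandard hc
  have hNfin : ∀ l, Module.Finite A (Nb l) := fun l =>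
    have := (hN l).1
    .of_restrictScalars_finite R A (Nb l)
  have hTΔ : Filt A (fun X => IsTensorFactor R A Δ Set.univ X) Tt := .pi hT.filt_standard
  have hTN : Filt A (fun X => IsTensorFactor R A Nb Set.univ X) Tt := .pi hT.filt_costandard
  have hL : ∀ (S : Set Λ) (X : Type) [AddCommGroup X] [Module A X],
      IsTensorFactor R A Nb S X → LiftsAlong A Tt X := fun S X _ _ hX =>
    liftsAlong_of_filt hc.liftsAlong hTΔ (.of_factor hX)
  have hLF : ∀ (X : Type) [AddCommGroup X] [Module A X],
      Filt A (fun X => IsTensorFactor R A Nb Set.univ X) X → LiftsAlong A Tt X := fun X _ _ hX =>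
    liftsAlong_of_filt hc.liftsAlong hTΔ hX
  classical
  have hret : ∀ l, LinearMap.proj l ∘ₗ LinearMap.single A T l = LinearMap.id := fun l =>
    LinearMap.proj_comp_single_same A T l
  choose g hg hK using fun l => (hT l).2
  have hK' : ∀ l, Filt A (fun X => IsTensorFactor R A Nb {m | m < l} X) (LinearMap.ker (g l)) :=
    fun l => filt_of_inFilt (hK l)
  have hC : ∀ (X : Type) [AddCommGroup X] [Module A X],
      IsTensorFactor R A Nb Set.univ X →
        HasCover A Tt (fun X => IsTensorFactor R A Nb Set.univ X) X := fun X _ _ hX =>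
    hX.hasCover (T := Tt) (LinearMap.single A T) LinearMap.proj hret g hg fun l _ =>
      (hK' l).mono fun _ _ _ hX => hX.mono (Set.subset_univ _)
  have hB : FiniteProjective R (Module.End A Tt) :=
    finiteProjective_hom_of_filt hc.liftsAlong hc.finiteProjective_hom hTΔ hTN
  have hB' : FiniteProjective R (Module.End A Tt)ᵐᵒᵖ := hB.of_equiv (MulOpposite.opLinearEquiv R)
  have hΔB : ∀ l, FiniteProjective R (Tt →ₗ[A] Nb l) := fun l =>
    finiteProjective_hom_of_filt hc.liftsAlong hc.finiteProjective_hom hTΔ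
      (.of_factor (.self (Set.mem_univ l)))
  have hΔBfin : ∀ l : Λᵒᵈ, Module.Finite (Module.End A Tt)ᵐᵒᵖ
      (Tt →ₗ[A] Nb (OrderDual.ofDual l)) := fun l =>
    have := (hΔB (OrderDual.ofDual l)).1
    .of_restrictScalars_finite R _ _
  have hfull : ∀ (X Y : Type) [AddCommGroup X] [Module A X] [AddCommGroup Y] [Module A Y],
      Filt A (fun X => IsTensorFactor R A Nb Set.univ X) X →
      Function.Bijective (fun f : X →ₗ[A] Y => Gmap A Tt f) := fun X Y _ _ _ _ hX =>
    Gmap_bijective_of_filt (hL Set.univ) hC hX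
  have hNfilt : ∀ l, Filt A (fun X => IsTensorFactor R A Nb Set.univ X) (Nb l) := fun l =>
    .of_factor (.self (Set.mem_univ l))
  refine ⟨fun X _ _ hX => ?_, fun X Y _ _ _ _ hX _ => hfull X Y (filt_of_inFilt hX),
    fun Z _ _ hZ => ?_, fun X Y Z _ _ _ _ _ _ f q hX _ _ hf hq hfq => ?_, ?_⟩
  · exact inFilt_of_filt hΔBfin
      ((filt_of_inFilt hX).map_Gobj (hL Set.univ) fun _ _ _ hX => hX.map_Gobj Tt)
  · obtain ⟨X, hX, e⟩ := exists_equiv_Gobj_of_filt (hL Set.univ) hC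
      (fun Z _ _ hZ => hZ.exists_equiv_Gobj) (filt_of_inFilt hZ)
    exact ⟨X, inFilt_of_filt hNfin hX, e⟩
  · exact ⟨Gmap_injective hf, Gmap_surjective hf hq hfq (hLF X (filt_of_inFilt hX)),
      Gmap_exact hf hfq⟩
  · obtain ⟨hD⟩ := hc.1
    exact ⟨{
      algFin := hB'.1
      algProj := hB'.2
      deltaFinA := hΔBfin
      deltaFinR := fun l => (hΔB (OrderDual.ofDual l)).1
      deltaProjR := fun l => (hΔB (OrderDual.ofDual l)).2
      hom_le := by
        rintro l m ⟨φ, hφ⟩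
        obtain ⟨f, rfl⟩ := (hfull (Nb (OrderDual.ofDual l)) (Nb (OrderDual.ofDual m))
          (hNfilt _)).2 φ
        refine hD.hom_le (OrderDual.ofDual m) (OrderDual.ofDual l) ⟨dualMapOp R f, fun h0 => hφ ?_⟩
        obtain rfl : f = 0 := dualMapOp_injective (hN _) (h0.trans (by ext; simp))
        ext
        simp
      endIso := fun l => nonempty_end_Gobj_equiv (hfull _ _ (hNfilt _))
        (algebraMap_end_bijective_of_dual (hN _) (hD.endIso _))
      P := fun l => ModuleCat.of _ (Tt →ₗ[A] T (OrderDual.ofDual l))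
      P_proj := fun l => projective_Gobj (hret _)
      P_fin := fun l => finite_Gobj (hret _)
      epi := fun l => Gmap A Tt (g (OrderDual.ofDual l))
      epi_surj := fun l => Gmap_surjective (Submodule.subtype_injective _) (hg _)
        (fun x => by simp) (liftsAlong_of_filt hc.liftsAlong hTΔ (hK' (OrderDual.ofDual l)))
      ker_filt := fun l => inFilt_of_filt hΔBfin <|
        .ker_of_exact (Gmap_injective (Submodule.subtype_injective _))
          (Gmap_exact (Submodule.subtype_injective _) (fun x => by simp))
          ((hK' (OrderDual.ofDual l)).map_Gobj (hL _) fun _ _ _ hX =>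
            IsTensorFactor.map_Gobj (S := {m | m < OrderDual.ofDual l}) Tt hX)
      add_gen := fun Q _ _ => inAdd_Gobj_pi T }⟩

end
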